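/- Let f ∈ BV(X). Then there exist Lipschitz functions f_i : X → ℝ and bounded Lipschitz functions v_i : X → [0,∞) such that v_i is an upper gradient of f_i for each i, f_i → f in L¹_loc(X), and the measures v_i·μ converge weakly* to the variation measure of f; in particular, for every open set U ⊆ X, V(f,U) ≤ liminf_{i→∞} ∫_U v_i dμ, and for every closed set F ⊆ X, limsup_{i→∞} ∫_F v_i dμ ≤ V(f,F). -/

import Mathlib

open MeasureTheory Metric Filter Set Topology
open scoped NNReal ENNReal

noncomputable section

universe u

/-- The measure `μ` is doubling with constant `Cd`:
`0 < μ(B(x,2r)) ≤ Cd·μ(B(x,r)) < ∞` for every `x` and every `r > 0`. -/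
def IsDoublingWith {X : Type u} [PseudoMetricSpace X] [MeasurableSpace X]
    (μ : Measure X) (Cd : ℝ≥0) : Prop :=
  ∀ (x : X) (r : ℝ), 0 < r →
    0 < μ (ball x (2 * r)) ∧
      μ (ball x (2 * r)) ≤ (Cd : ℝ≥0∞) * μ (ball x r) ∧
      (Cd : ℝ≥0∞) * μ (ball x r) < ⊤

/-- `X` is a geodesic space: any two points are joined by a unit-speed geodesic. -/
def IsGeodesic (X : Type u) [PseudoMetricSpace X] : Prop :=
  ∀ x y : X, ∃ γ : ℝ → X,
    LipschitzOnWith 1 γ (Icc 0 (dist x y)) ∧ γ 0 = x ∧ γ (dist x y) = y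

/-- `g` is an upper gradient of `u`: for every `L ≥ 0` and every `1`-Lipschitz curve
`γ : [0,L] → X`, `|u(γ 0) − u(γ L)| ≤ ∫₀^L g(γ t) dt`. -/
def IsUpperGradientOf {X : Type u} [PseudoMetricSpace X] (g u : X → ℝ) : Prop :=
  ∀ L : ℝ, 0 ≤ L → ∀ γ : ℝ → X, LipschitzOnWith 1 γ (Icc 0 L) →
    |u (γ 0) - u (γ L)| ≤ ∫ t in (0:ℝ)..L, g (γ t)

/-- The lower pointwise Lipschitz constant
`lip u (x) = liminf_{r→0} r⁻¹ sup_{y ∈ B(x,r)} |u y − u x|`. -/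
def lipConst {X : Type u} [PseudoMetricSpace X] (u : X → ℝ) (x : X) : ℝ≥0∞ :=
  Filter.liminf
    (fun r : ℝ => ⨆ y ∈ ball x r, ENNReal.ofReal (|u y - u x| / r)) (𝓝[>] (0:ℝ))

/-- `u` is locally Lipschitz on `W`: Lipschitz on every closed bounded subset of `W`. -/
def LocallyLipschitzOnSet {X : Type u} [PseudoMetricSpace X] (u : X → ℝ) (W : Set X) : Prop :=
  ∀ K : Set X, IsClosed K → Bornology.IsBounded K → K ⊆ W →
    ∃ L : ℝ≥0, LipschitzOnWith L u K

/-- `u i → f` in `L¹_loc(W)`. -/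
def TendstoL1loc {X : Type u} [PseudoMetricSpace X] [MeasurableSpace X]
    (μ : Measure X) (u : ℕ → X → ℝ) (f : X → ℝ) (W : Set X) : Prop :=
  ∀ K : Set X, IsClosed K → Bornology.IsBounded K → K ⊆ W →
    Tendsto (fun i => ∫⁻ x in K, ENNReal.ofReal |u i x - f x| ∂μ) atTop (𝓝 0)

/-- Total variation `V(f,W)` of `f` on an open set `W`:
the infimum over sequences of locally Lipschitz functions converging to `f` in `L¹_loc(W)`
of the liminf of `∫_W lip u_i dμ`. -/
def totVarOn {X : Type u} [PseudoMetricSpace X] [MeasurableSpace X]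
    (μ : Measure X) (f : X → ℝ) (W : Set X) : ℝ≥0∞ :=
  ⨅ (us : ℕ → X → ℝ) (_ : ∀ i, LocallyLipschitzOnSet (us i) W)
    (_ : TendstoL1loc μ us f W),
    Filter.liminf (fun i => ∫⁻ x in W, lipConst (us i) x ∂μ) atTop

/-- Total variation `V(f,A)` of `f` on an arbitrary set `A`:
infimum of `V(f,W)` over open `W ⊇ A`. -/
def totVarSet {X : Type u} [PseudoMetricSpace X] [MeasurableSpace X]
    (μ : Measure X) (f : X → ℝ) (A : Set X) : ℝ≥0∞ :=
  ⨅ (W : Set X) (_ : IsOpen W) (_ : A ⊆ W), totVarOn μ f W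

/-- `f` is of bounded variation: locally integrable and `V(f,X) < ∞`. -/
def IsBV {X : Type u} [MetricSpace X] [MeasurableSpace X]
    (μ : Measure X) (f : X → ℝ) : Prop :=
  LocallyIntegrable f μ ∧ totVarOn μ f Set.univ < ⊤

/-- `(X,d,μ)` supports a `1`-Poincaré inequality with constant `CP`. -/
def SupportsPoincare {X : Type u} [MetricSpace X] [MeasurableSpace X]
    (μ : Measure X) (CP : ℝ) : Prop :=
  ∀ u : X → ℝ, LocallyLipschitzOnSet u Set.univ →
    ∀ g : X → ℝ, (∀ x, 0 ≤ g x) → Measurable g → IsUpperGradientOf g u →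
      ∀ (x : X) (r : ℝ), 0 < r →
        (⨍ y in ball x r, |u y - (⨍ z in ball x r, u z ∂μ)| ∂μ) ≤
          CP * r * (⨍ y in ball x r, g y ∂μ)

/-- Standing assumptions: a complete geodesic metric measure space with at least two
points, whose measure is doubling and supports a 1-Poincaré inequality. -/
def GoodSpace (X : Type u) [MetricSpace X] [MeasurableSpace X]
    (μ : Measure X) (Cd : ℝ≥0) (CP : ℝ) : Prop :=
  Nontrivial X ∧ CompleteSpace X ∧ IsGeodesic X ∧
    IsDoublingWith μ Cd ∧ SupportsPoincare μ CP

/-- The codimension-1 Hausdorff measure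
`𝓗(A) = sup_{δ>0} inf { Σ μ(B_i)/r_i : 0 < r_i ≤ δ, A ⊆ ⋃ B_i }`,
the infimum over countable coverings of `A` by balls (balls of nonpositive radius
are empty and contribute `0`). -/
def codimOneH {X : Type u} [PseudoMetricSpace X] [MeasurableSpace X]
    (μ : Measure X) (A : Set X) : ℝ≥0∞ :=
  ⨆ (δ : ℝ) (_ : 0 < δ),
    ⨅ (c : ℕ → X) (r : ℕ → ℝ) (_ : ∀ i, r i ≤ δ)
      (_ : A ⊆ ⋃ i, ball (c i) (r i)),
      ∑' i, if 0 < r i then μ (ball (c i) (r i)) / ENNReal.ofReal (r i) else 0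

/-- The measure theoretic boundary `∂*E`. -/
def measBdry {X : Type u} [PseudoMetricSpace X] [MeasurableSpace X]
    (μ : Measure X) (E : Set X) : Set X :=
  {x : X |
    0 < Filter.limsup (fun r : ℝ => μ (E ∩ ball x r) / μ (ball x r)) (𝓝[>] (0:ℝ)) ∧
    0 < Filter.limsup (fun r : ℝ => μ (Eᶜ ∩ ball x r) / μ (ball x r)) (𝓝[>] (0:ℝ))}

/-- `A` has density `0` at `x`. -/
def DensityZeroAt {X : Type u} [PseudoMetricSpace X] [MeasurableSpace X]
    (μ : Measure X) (A : Set X) (x : X) : Prop :=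
  Tendsto (fun r : ℝ => μ (A ∩ ball x r) / μ (ball x r)) (𝓝[>] (0:ℝ)) (𝓝 0)

/-- `A` has density `1` at `x`. -/
def DensityOneAt {X : Type u} [PseudoMetricSpace X] [MeasurableSpace X]
    (μ : Measure X) (A : Set X) (x : X) : Prop :=
  Tendsto (fun r : ℝ => μ (A ∩ ball x r) / μ (ball x r)) (𝓝[>] (0:ℝ)) (𝓝 1)

/-- `x` is a Lebesgue point of `u`. -/
def LebesguePointOf {X : Type u} [MetricSpace X] [MeasurableSpace X]
    (μ : Measure X) (u : X → ℝ) (x : X) : Prop :=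
  Tendsto (fun r : ℝ => ⨍ y in ball x r, |u y - u x| ∂μ) (𝓝[>] (0:ℝ)) (𝓝 0)

/-- `u` is a Borel representative whose value at each Lebesgue point equals the limit
of its ball averages. -/
def PreciseRep {X : Type u} [MetricSpace X] [MeasurableSpace X]
    (μ : Measure X) (u : X → ℝ) : Prop :=
  Measurable u ∧ ∀ (x : X) (c : ℝ),
    Tendsto (fun r : ℝ => ⨍ y in ball x r, u y ∂μ) (𝓝[>] (0:ℝ)) (𝓝 c) → u x = c

/-- The restricted maximal function `M_R ν (x) = sup_{0<r≤R} ν(B(x,r))/μ(B(x,r))`. -/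
def restrMaximal {X : Type u} [PseudoMetricSpace X] [MeasurableSpace X]
    (μ ν : Measure X) (R : ℝ) (x : X) : ℝ≥0∞ :=
  ⨆ (r : ℝ) (_ : 0 < r) (_ : r ≤ R), ν (ball x r) / μ (ball x r)

/-- `F_g(x,y)`: the infimum of `∫_γ g ds` over 1-Lipschitz curves `γ : [0,L] → Z`
joining `x` to `y` (the infimum over the empty set is `∞`). -/
def curveInf {Z : Type u} [PseudoMetricSpace Z] (g : Z → ℝ) (x y : Z) : ℝ≥0∞ :=
  ⨅ (L : ℝ) (_ : 0 ≤ L) (γ : ℝ → Z) (_ : LipschitzOnWith 1 γ (Icc 0 L))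
    (_ : γ 0 = x) (_ : γ L = y),
    ∫⁻ t in Icc (0:ℝ) L, ENNReal.ofReal (g (γ t))

/-- Weak-star convergence of measures: test against continuous, compactly
supported functions. -/
def WeakStar {Z : Type u} [MetricSpace Z] [MeasurableSpace Z]
    (ν : ℕ → Measure Z) (m : Measure Z) : Prop :=
  ∀ φ : Z → ℝ, Continuous φ → HasCompactSupport φ →
    Tendsto (fun n => ∫ x, φ x ∂(ν n)) atTop (𝓝 (∫ x, φ x ∂m))

/-- `φ ∈ BV_c(U)`: a BV function whose support is compact and contained in `U`. -/
def MemBVc {X : Type u} [MetricSpace X] [MeasurableSpace X]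
    (μ : Measure X) (φ : X → ℝ) (U : Set X) : Prop :=
  IsBV μ φ ∧ IsCompact (tsupport φ) ∧ tsupport φ ⊆ U

section Doubling

variable {X : Type u} [MetricSpace X] [MeasurableSpace X] {μ : Measure X} {Cd : ℝ≥0}

theorem IsDoublingWith.measure_ball_lt_top (h : IsDoublingWith μ Cd) (hCd : 1 ≤ Cd) (x : X) (r : ℝ) :
    μ (ball x r) < ⊤ := by
  rcases le_or_gt r 0 with hr | hr
  · simp [ball_eq_empty.2 hr]
  · refine lt_of_le_of_lt ?_ (h x r hr).2.2
    exact le_mul_of_one_le_left (by simp) (by exact_mod_cast hCd)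

theorem IsDoublingWith.measure_ball_pos (h : IsDoublingWith μ Cd) (x : X) {r : ℝ} (hr : 0 < r) :
    0 < μ (ball x r) := by
  have := (h x (r / 2) (by positivity)).1
  rwa [mul_div_cancel₀ _ (two_ne_zero)] at this

theorem IsDoublingWith.measure_ball_pow_le (h : IsDoublingWith μ Cd) (x : X) {r : ℝ} (hr : 0 < r)
    (n : ℕ) : μ (ball x (2 ^ n * r)) ≤ (Cd : ℝ≥0∞) ^ n * μ (ball x r) := by
  induction n with
  | zero => simp
  | succ n ih =>
    have := (h x (2 ^ n * r) (by positivity)).2.1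
    calc μ (ball x (2 ^ (n + 1) * r)) = μ (ball x (2 * (2 ^ n * r))) := by
          congr 2; ring
      _ ≤ Cd * μ (ball x (2 ^ n * r)) := this
      _ ≤ Cd * (Cd ^ n * μ (ball x r)) := by gcongr
      _ = _ := by ring

theorem IsDoublingWith.measure_ball_le_of_dist (h : IsDoublingWith μ Cd) {x y : X} {r s : ℝ}
    (hr : 0 < r) (n : ℕ) (hs : s + dist x y ≤ 2 ^ n * r) :
    μ (ball x s) ≤ (Cd : ℝ≥0∞) ^ n * μ (ball y r) :=
  (measure_mono (ball_subset_ball' hs)).trans (h.measure_ball_pow_le y hr n)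

theorem IsDoublingWith.totallyBounded_closedBall [OpensMeasurableSpace X]
    (h : IsDoublingWith μ Cd) (hCd : 1 ≤ Cd) (x : X) (R : ℝ) :
    TotallyBounded (closedBall x R) := by
  rw [Metric.totallyBounded_iff]
  intro ε hε
  obtain ⟨N, hN⟩ : ∃ N, Maximal (fun N ↦ N ⊆ closedBall x R ∧ N.Pairwise fun y z ↦ ε ≤ dist y z) N := by
    apply zorn_subset
    intro c hc hchain
    refine ⟨⋃₀ c, ⟨sUnion_subset fun s hs ↦ (hc hs).1, ?_⟩, fun s hs ↦ subset_sUnion_of_mem hs⟩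
    exact (pairwise_sUnion hchain.directedOn).2 fun s hs ↦ (hc hs).2
  have hfin : N.Finite := by
    rcases N.eq_empty_or_nonempty with h0 | ⟨y₀, hy₀⟩
    · simp [h0]
    have hR : 0 ≤ R := by
      by_contra! hlt
      have := hN.1.1 hy₀
      simp [closedBall_eq_empty.2 hlt] at this
    obtain ⟨n, hn⟩ : ∃ n : ℕ, (2 * R + ε) / (ε / 2) < 2 ^ n := pow_unbounded_of_one_lt _ one_lt_two
    have hn' : 2 * R + ε ≤ 2 ^ n * (ε / 2) := by
      rw [div_lt_iff₀ (by positivity)] at hn; exact hn.le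
    have hC0 : (Cd : ℝ≥0∞) ^ n ≠ 0 := pow_ne_zero _ (by
      have : Cd ≠ 0 := (lt_of_lt_of_le zero_lt_one hCd).ne'
      exact_mod_cast this)
    have hCt : (Cd : ℝ≥0∞) ^ n ≠ ⊤ := ENNReal.pow_ne_top ENNReal.coe_ne_top
    have key := Measure.finite_const_le_meas_of_disjoint_iUnion μ
      (ε := μ (ball x (R + ε)) / (Cd : ℝ≥0∞) ^ n) (As := fun y : N ↦ ball (y : X) (ε / 2))
      (ENNReal.div_pos (h.measure_ball_pos x (by positivity)).ne' hCt)
      (fun _ ↦ isOpen_ball.measurableSet) (by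
        intro y z hyz
        apply ball_disjoint_ball
        have := hN.1.2 y.2 z.2 (fun hh ↦ hyz (Subtype.ext hh))
        linarith) (by
        refine ((measure_mono ?_).trans_lt (h.measure_ball_lt_top hCd x (R + ε))).ne
        refine iUnion_subset fun y ↦ ball_subset_ball' ?_
        have := mem_closedBall.1 (hN.1.1 y.2)
        linarith)
    have huniv : {y : N | μ (ball x (R + ε)) / (Cd : ℝ≥0∞) ^ n ≤ μ (ball (y : X) (ε / 2))} = univ := by
      refine eq_univ_of_forall fun y ↦ ?_
      refine ENNReal.div_le_of_le_mul' (h.measure_ball_le_of_dist (by positivity) n ?_)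
      have := mem_closedBall'.1 (hN.1.1 y.2)
      linarith
    rw [huniv] at key
    exact Set.finite_coe_iff.1 (Set.finite_univ_iff.1 key)
  refine ⟨N, hfin, fun y hy ↦ ?_⟩
  by_contra hcon
  simp only [mem_iUnion, mem_ball, not_exists, not_lt] at hcon
  have hins : insert y N ⊆ N := hN.2 (y := insert y N) ⟨insert_subset hy hN.1.1, by
    refine hN.1.2.insert fun z hz _ ↦ ⟨hcon z hz, ?_⟩
    rw [dist_comm]; exact hcon z hz⟩ (subset_insert _ _)
  have := hcon y (hins (mem_insert _ _))
  simp at this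
  linarith

theorem IsDoublingWith.properSpace [OpensMeasurableSpace X] [CompleteSpace X]
    (h : IsDoublingWith μ Cd) (hCd : 1 ≤ Cd) : ProperSpace X :=
  ⟨fun x R ↦ isCompact_iff_totallyBounded_isComplete.2
    ⟨h.totallyBounded_closedBall hCd x R, isClosed_closedBall.isComplete⟩⟩

end Doubling

section GradPair

variable {X : Type u} [PseudoMetricSpace X]

/-- The (upper) pointwise Lipschitz constant of `u` at `x` is at most `c`. -/
def PtLipLE (u : X → ℝ) (x : X) (c : ℝ) : Prop :=
  ∀ ε > 0, ∀ᶠ y in 𝓝 x, |u y - u x| ≤ (c + ε) * dist y x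

/-- `u` and `v` are bounded Lipschitz functions, `v` is nonnegative and bounds the pointwise
Lipschitz constant of `u` everywhere. -/
structure GradPair (u v : X → ℝ) : Prop where
  lip_fun : ∃ L : ℝ≥0, LipschitzWith L u
  lip_grad : ∃ L : ℝ≥0, LipschitzWith L v
  bdd_fun : ∃ M : ℝ, ∀ x, |u x| ≤ M
  bdd_grad : ∃ M : ℝ, ∀ x, v x ≤ M
  grad_nonneg : ∀ x, 0 ≤ v x
  ptLip : ∀ x, PtLipLE u x (v x)

theorem exists_lipschitzWith_mul {u v : X → ℝ} (hu : ∃ L : ℝ≥0, LipschitzWith L u)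
    (hv : ∃ L : ℝ≥0, LipschitzWith L v) (hbu : ∃ M : ℝ, ∀ x, |u x| ≤ M)
    (hbv : ∃ M : ℝ, ∀ x, |v x| ≤ M) : ∃ L : ℝ≥0, LipschitzWith L (fun x ↦ u x * v x) := by
  obtain ⟨L, hL⟩ := hu
  obtain ⟨L', hL'⟩ := hv
  obtain ⟨M, hM⟩ := hbu
  obtain ⟨M', hM'⟩ := hbv
  have hM0 : ∀ x : X, 0 ≤ M := fun x ↦ (abs_nonneg _).trans (hM x)
  refine ⟨M.toNNReal * L' + M'.toNNReal * L, LipschitzWith.of_dist_le_mul fun x y ↦ ?_⟩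
  have h1 := hL.dist_le_mul x y
  have h2 := hL'.dist_le_mul x y
  have hMx := hM x
  have hMy := hM' y
  rw [Real.dist_eq] at *
  have e : u x * v x - u y * v y = u x * (v x - v y) + v y * (u x - u y) := by ring
  rw [e]
  push_cast
  rw [Real.coe_toNNReal _ ((abs_nonneg _).trans hMx), Real.coe_toNNReal _ ((abs_nonneg _).trans hMy)]
  calc _ ≤ |u x| * |v x - v y| + |v y| * |u x - u y| := by
        rw [← abs_mul, ← abs_mul]; exact abs_add_le _ _
    _ ≤ M * (L' * dist x y) + M' * (L * dist x y) := by
        gcongr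
        · exact (abs_nonneg _).trans hMx
        · exact (abs_nonneg _).trans hMy
    _ = _ := by ring

theorem exists_lipschitzWith_add {u v : X → ℝ} (hu : ∃ L : ℝ≥0, LipschitzWith L u)
    (hv : ∃ L : ℝ≥0, LipschitzWith L v) : ∃ L : ℝ≥0, LipschitzWith L (fun x ↦ u x + v x) :=
  ⟨_, hu.choose_spec.add hv.choose_spec⟩

theorem exists_lipschitzWith_sub {u v : X → ℝ} (hu : ∃ L : ℝ≥0, LipschitzWith L u)
    (hv : ∃ L : ℝ≥0, LipschitzWith L v) : ∃ L : ℝ≥0, LipschitzWith L (fun x ↦ u x - v x) :=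
  ⟨_, hu.choose_spec.sub hv.choose_spec⟩

theorem exists_lipschitzWith_abs {u : X → ℝ} (hu : ∃ L : ℝ≥0, LipschitzWith L u) :
    ∃ L : ℝ≥0, LipschitzWith L (fun x ↦ |u x|) :=
  ⟨_, lipschitzWith_one_norm.comp hu.choose_spec⟩

/-- A convex combination of two functions with a variable coefficient. -/
theorem PtLipLE.blend {φ u₁ u₂ : X → ℝ} {x : X} {c c₁ c₂ : ℝ} (hφ0 : 0 ≤ φ x) (hφ1 : φ x ≤ 1)
    (hc : 0 ≤ c) (hφ : PtLipLE φ x c) (h₁ : PtLipLE u₁ x c₁) (h₂ : PtLipLE u₂ x c₂)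
    (hu₁ : ContinuousAt u₁ x) (hu₂ : ContinuousAt u₂ x) :
    PtLipLE (fun y ↦ φ y * u₁ y + (1 - φ y) * u₂ y) x
      (φ x * c₁ + (1 - φ x) * c₂ + c * |u₁ x - u₂ x|) := by
  intro ε hε
  have hlim : Tendsto (fun y ↦ |u₁ y - u₂ y|) (𝓝 x) (𝓝 |u₁ x - u₂ x|) := (hu₁.sub hu₂).abs
  set m := |u₁ x - u₂ x| with hm
  have hm0 : 0 ≤ m := abs_nonneg _
  set δ : ℝ := min 1 (ε / (4 * (c + m + 2))) with hδ
  have hδ0 : 0 < δ := by positivity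
  have hδ1 : δ ≤ 1 := min_le_left _ _
  have hδ2 : δ * (4 * (c + m + 2)) ≤ ε := by
    rw [← le_div_iff₀ (by positivity)]; exact min_le_right _ _
  filter_upwards [hφ δ hδ0, h₁ (ε / 4) (by positivity), h₂ (ε / 4) (by positivity),
    hlim.eventually (gt_mem_nhds (show m < m + δ by linarith))] with y h1 h2 h3 h4
  have e : φ y * u₁ y + (1 - φ y) * u₂ y - (φ x * u₁ x + (1 - φ x) * u₂ x) =
    φ x * (u₁ y - u₁ x) + (1 - φ x) * (u₂ y - u₂ x) + (φ y - φ x) * (u₁ y - u₂ y) := by ring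
  rw [e]
  have hd : 0 ≤ dist y x := dist_nonneg
  calc _ ≤ |φ x * (u₁ y - u₁ x)| + |(1 - φ x) * (u₂ y - u₂ x)| + |(φ y - φ x) * (u₁ y - u₂ y)| :=
        abs_add_three _ _ _
    _ = φ x * |u₁ y - u₁ x| + (1 - φ x) * |u₂ y - u₂ x| + |φ y - φ x| * |u₁ y - u₂ y| := by
        rw [abs_mul, abs_mul, abs_mul, abs_of_nonneg hφ0, abs_of_nonneg (by linarith : 0 ≤ 1 - φ x)]
    _ ≤ φ x * ((c₁ + ε / 4) * dist y x) + (1 - φ x) * ((c₂ + ε / 4) * dist y x) +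
          ((c + δ) * dist y x) * (m + δ) := by
        gcongr
    _ = (φ x * c₁ + (1 - φ x) * c₂ + c * m + (ε / 4 + δ * (c + m + δ))) * dist y x := by ring
    _ ≤ _ := by
        gcongr
        nlinarith

theorem GradPair.continuous_fun {u v : X → ℝ} (h : GradPair u v) : Continuous u :=
  h.lip_fun.choose_spec.continuous

theorem GradPair.continuous_grad {u v : X → ℝ} (h : GradPair u v) : Continuous v :=
  h.lip_grad.choose_spec.continuous

theorem GradPair.bdd_grad_abs {u v : X → ℝ} (h : GradPair u v) : ∃ M : ℝ, ∀ x, |v x| ≤ M :=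
  ⟨_, fun x ↦ by rw [abs_of_nonneg (h.grad_nonneg x)]; exact h.bdd_grad.choose_spec x⟩

theorem GradPair.blend {φ ψ u₁ v₁ u₂ v₂ : X → ℝ} (hφ : GradPair φ ψ) (hφ0 : ∀ x, 0 ≤ φ x)
    (hφ1 : ∀ x, φ x ≤ 1) (h₁ : GradPair u₁ v₁) (h₂ : GradPair u₂ v₂) :
    GradPair (fun x ↦ φ x * u₁ x + (1 - φ x) * u₂ x)
      (fun x ↦ φ x * v₁ x + (1 - φ x) * v₂ x + ψ x * |u₁ x - u₂ x|) := by
  have hone : ∃ L : ℝ≥0, LipschitzWith L (fun x ↦ 1 - φ x) :=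
    exists_lipschitzWith_sub ⟨0, LipschitzWith.const 1⟩ hφ.lip_fun
  have honeb : ∃ M : ℝ, ∀ x, |1 - φ x| ≤ M :=
    ⟨1, fun x ↦ by rw [abs_le]; constructor <;> linarith [hφ0 x, hφ1 x]⟩
  have hdiff : ∃ M : ℝ, ∀ x, abs |u₁ x - u₂ x| ≤ M := by
    obtain ⟨M, hM⟩ := h₁.bdd_fun
    obtain ⟨M', hM'⟩ := h₂.bdd_fun
    exact ⟨M + M', fun x ↦ by
      rw [abs_abs]; exact (abs_sub _ _).trans (add_le_add (hM x) (hM' x))⟩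
  have hn : ∀ x, 0 ≤ φ x * v₁ x + (1 - φ x) * v₂ x + ψ x * |u₁ x - u₂ x| := fun x ↦ by
    have := hφ0 x
    have : 0 ≤ 1 - φ x := by linarith [hφ1 x]
    have := h₁.grad_nonneg x
    have := h₂.grad_nonneg x
    have := hφ.grad_nonneg x
    positivity
  refine ⟨?_, ?_, ?_, ?_, hn, fun x ↦ ?_⟩
  · exact exists_lipschitzWith_add (exists_lipschitzWith_mul hφ.lip_fun h₁.lip_fun hφ.bdd_fun h₁.bdd_fun)
      (exists_lipschitzWith_mul hone h₂.lip_fun honeb h₂.bdd_fun)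
  · exact exists_lipschitzWith_add (exists_lipschitzWith_add
      (exists_lipschitzWith_mul hφ.lip_fun h₁.lip_grad hφ.bdd_fun h₁.bdd_grad_abs)
      (exists_lipschitzWith_mul hone h₂.lip_grad honeb h₂.bdd_grad_abs))
      (exists_lipschitzWith_mul hφ.lip_grad (exists_lipschitzWith_abs
        (exists_lipschitzWith_sub h₁.lip_fun h₂.lip_fun)) hφ.bdd_grad_abs hdiff)
  · obtain ⟨M, hM⟩ := h₁.bdd_fun
    obtain ⟨M', hM'⟩ := h₂.bdd_fun
    refine ⟨M + M', fun x ↦ ?_⟩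
    have h0 := hφ0 x
    have h1 : 0 ≤ 1 - φ x := by linarith [hφ1 x]
    calc _ ≤ φ x * |u₁ x| + (1 - φ x) * |u₂ x| := by
          refine (abs_add_le _ _).trans_eq ?_
          rw [abs_mul, abs_mul, abs_of_nonneg h0, abs_of_nonneg h1]
      _ ≤ 1 * |u₁ x| + 1 * |u₂ x| := by gcongr; exacts [hφ1 x, by linarith]
      _ ≤ _ := by linarith [hM x, hM' x]
  · obtain ⟨M, hM⟩ := h₁.bdd_grad
    obtain ⟨M', hM'⟩ := h₂.bdd_grad
    obtain ⟨N, hN⟩ := hdiff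
    obtain ⟨P, hP⟩ := hφ.bdd_grad
    refine ⟨M + M' + P * N, fun x ↦ ?_⟩
    have h0 := hφ0 x
    have h1 : 0 ≤ 1 - φ x := by linarith [hφ1 x]
    have e1 : φ x * v₁ x ≤ M := (mul_le_of_le_one_left (h₁.grad_nonneg x) (hφ1 x)).trans (hM x)
    have e2 : (1 - φ x) * v₂ x ≤ M' :=
      (mul_le_of_le_one_left (h₂.grad_nonneg x) (by linarith)).trans (hM' x)
    have e3 : ψ x * |u₁ x - u₂ x| ≤ P * N := by
      have := hN x
      rw [abs_abs] at this
      exact mul_le_mul (hP x) this (abs_nonneg _) ((hφ.grad_nonneg x).trans (hP x))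
    linarith
  · exact (hφ.ptLip x).blend (hφ0 x) (hφ1 x) (hφ.grad_nonneg x) (h₁.ptLip x) (h₂.ptLip x)
      h₁.continuous_fun.continuousAt h₂.continuous_fun.continuousAt

/-- Truncation of a Lipschitz function to `[0, 1]`, together with a gradient bound supported in
a slightly larger transition region. -/
theorem gradPair_clamp {θ : X → ℝ} {L : ℝ≥0} (hθ : LipschitzWith L θ) :
    GradPair (fun x ↦ max 0 (min 1 (θ x)))
      (fun x ↦ L * max 0 (min 1 (2 - |2 * θ x - 1|))) := by
  have hφ : LipschitzWith L (fun x ↦ max 0 (min 1 (θ x))) := (hθ.const_min 1).const_max 0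
  have hχ : ∃ L' : ℝ≥0, LipschitzWith L' (fun x ↦ max 0 (min 1 (2 - |2 * θ x - 1|))) := by
    obtain ⟨L', hL'⟩ : ∃ L' : ℝ≥0, LipschitzWith L' (fun x ↦ 2 - |2 * θ x - 1|) := by
      refine exists_lipschitzWith_sub ⟨0, LipschitzWith.const 2⟩ (exists_lipschitzWith_abs
        (exists_lipschitzWith_sub ⟨2 * L, ?_⟩ ⟨0, LipschitzWith.const 1⟩))
      refine LipschitzWith.of_dist_le_mul fun x y ↦ ?_
      have := hθ.dist_le_mul x y
      rw [Real.dist_eq] at *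
      rw [← mul_sub, abs_mul]
      simp only [Nat.abs_ofNat, NNReal.coe_mul, NNReal.coe_ofNat]
      linarith
    exact ⟨L', (hL'.const_min 1).const_max 0⟩
  have hb : ∀ t : ℝ, 0 ≤ max 0 (min 1 t) ∧ max 0 (min 1 t) ≤ 1 := fun t ↦
    ⟨le_max_left _ _, max_le zero_le_one (min_le_left _ _)⟩
  refine ⟨⟨L, hφ⟩, ?_, ⟨1, fun x ↦ ?_⟩, ⟨L * 1, fun x ↦ ?_⟩, fun x ↦ ?_, fun x ↦ ?_⟩
  · exact exists_lipschitzWith_mul ⟨0, LipschitzWith.const (L : ℝ)⟩ hχ ⟨_, fun _ ↦ le_rfl⟩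
      ⟨1, fun x ↦ by rw [abs_of_nonneg (hb _).1]; exact (hb _).2⟩
  · rw [abs_of_nonneg (hb _).1]; exact (hb _).2
  · exact mul_le_mul_of_nonneg_left (hb _).2 L.2
  · exact mul_nonneg L.2 (hb _).1
  · intro ε hε
    by_cases hx : θ x ∈ Icc (0 : ℝ) 1
    · have : max 0 (min 1 (2 - |2 * θ x - 1|)) = 1 := by
        have : |2 * θ x - 1| ≤ 1 := by rw [abs_le]; constructor <;> linarith [hx.1, hx.2]
        rw [min_eq_left (by linarith), max_eq_right zero_le_one]
      rw [this, mul_one]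
      refine Eventually.of_forall fun y ↦ ?_
      have := hφ.dist_le_mul y x
      rw [Real.dist_eq] at this
      refine this.trans ?_
      gcongr
      linarith
    · have hconst : ∀ᶠ y in 𝓝 x, max 0 (min 1 (θ y)) = max 0 (min 1 (θ x)) := by
        rw [mem_Icc, not_and_or, not_le, not_le] at hx
        rcases hx with hx | hx
        · filter_upwards [hθ.continuous.continuousAt.eventually (gt_mem_nhds hx)] with y hy
          rw [min_eq_right (by linarith), min_eq_right (by linarith), max_eq_left hx.le,
            max_eq_left hy.le]
        · filter_upwards [hθ.continuous.continuousAt.eventually (lt_mem_nhds hx)] with y hy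
          rw [min_eq_left hx.le, min_eq_left hy.le]
      filter_upwards [hconst] with y hy
      rw [hy, sub_self, abs_zero]
      exact mul_nonneg (add_nonneg (mul_nonneg L.2 (hb _).1) hε.le) dist_nonneg

theorem PtLipLE.lipConst_le {u : X → ℝ} {x : X} {c : ℝ} (h : PtLipLE u x c) (hc : 0 ≤ c) :
    lipConst u x ≤ ENNReal.ofReal c := by
  refine ENNReal.le_of_forall_pos_le_add fun ε hε _ ↦ ?_
  obtain ⟨δ, hδ, hball⟩ := Metric.eventually_nhds_iff_ball.1 (h ε hε)
  rw [← ENNReal.ofReal_coe_nnreal, ← ENNReal.ofReal_add hc (NNReal.coe_nonneg ε)]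
  refine Filter.liminf_le_of_frequently_le' (Eventually.frequently ?_)
  filter_upwards [Ioo_mem_nhdsGT hδ] with r hr
  refine iSup₂_le fun y hy ↦ ENNReal.ofReal_le_ofReal ?_
  rw [div_le_iff₀ hr.1]
  refine (hball y (ball_subset_ball hr.2.le hy)).trans ?_
  gcongr
  exact (mem_ball.1 hy).le

/-- The derivative of `u` along a `1`-Lipschitz curve is at most the lower pointwise Lipschitz
constant of `u`. -/
theorem abs_deriv_le_lipConst {u : X → ℝ} {γ : ℝ → X} {a b t : ℝ}
    (hγ : LipschitzOnWith 1 γ (Icc a b)) (ht : t ∈ Ioo a b)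
    (hd : DifferentiableAt ℝ (fun s ↦ u (γ s)) t) :
    ENNReal.ofReal |deriv (fun s ↦ u (γ s)) t| ≤ lipConst u (γ t) := by
  have hslope : Tendsto (fun s ↦ |u (γ (t + s)) - u (γ t)| / s) (𝓝[>] 0)
      (𝓝 |deriv (fun s ↦ u (γ s)) t|) := by
    have := (hd.hasDerivAt.tendsto_slope_zero_right).abs
    refine this.congr' ?_
    filter_upwards [self_mem_nhdsWithin] with s hs
    rw [smul_eq_mul, abs_mul, abs_inv, abs_of_pos (mem_Ioi.1 hs)]
    ring
  rcases (abs_nonneg (deriv (fun s ↦ u (γ s)) t)).eq_or_lt with h0 | h0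
  · simp [← h0]
  refine le_of_forall_lt fun c hc ↦ ?_
  have hct : c ≠ ⊤ := (hc.trans ENNReal.ofReal_lt_top).ne
  obtain ⟨d, hcd, hd'⟩ := exists_between hc
  have hdt : d ≠ ⊤ := (hd'.trans ENNReal.ofReal_lt_top).ne
  refine hcd.trans_le ?_
  have hdr : d.toReal < |deriv (fun s ↦ u (γ s)) t| := by
    rwa [← ENNReal.ofReal_toReal hdt, ENNReal.ofReal_lt_ofReal_iff h0] at hd'
  obtain ⟨e, hde, he⟩ := exists_between hdr
  refine Filter.le_liminf_of_le (by isBoundedDefault) ?_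
  have hev := hslope.eventually (lt_mem_nhds he)
  rw [eventually_nhdsWithin_iff, Metric.eventually_nhds_iff_ball] at hev
  obtain ⟨δ, hδ, hball⟩ := hev
  filter_upwards [Ioo_mem_nhdsGT hδ, Ioo_mem_nhdsGT (show 0 < b - t by linarith [ht.2])] with r hr hr2
  have he0 : 0 < e := ENNReal.toReal_nonneg.trans_lt hde
  obtain ⟨s, hs1, hs2⟩ : ∃ s, max 0 (d.toReal * r / e) < s ∧ s < r := by
    refine exists_between (max_lt hr.1 ?_)
    rw [div_lt_iff₀ he0, mul_comm]
    exact mul_lt_mul_of_pos_left hde hr.1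
  have hs0 : 0 < s := (le_max_left _ _).trans_lt hs1
  have hs3 := (le_max_right _ _).trans_lt hs1
  rw [div_lt_iff₀ he0] at hs3
  have hmem : γ (t + s) ∈ ball (γ t) r := by
    have := hγ.dist_le_mul (t + s) ⟨by linarith [ht.1], by linarith [hr2.2]⟩ t ⟨ht.1.le, ht.2.le⟩
    rw [mem_ball]
    refine this.trans_lt ?_
    rw [Real.dist_eq, add_sub_cancel_left, abs_of_pos hs0]
    simpa using hs2
  refine le_trans ?_ (le_iSup₂ (f := fun y (_ : y ∈ ball (γ t) r) ↦
    ENNReal.ofReal (|u y - u (γ t)| / r)) (γ (t + s)) hmem)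
  rw [← ENNReal.ofReal_toReal hdt]
  refine ENNReal.ofReal_le_ofReal ?_
  have h1 := hball s (by rw [mem_ball, Real.dist_eq, sub_zero, abs_of_pos hs0]; linarith [hr.2]) hs0
  rw [lt_div_iff₀ hs0] at h1
  rw [le_div_iff₀ hr.1]
  linarith

/-- The lower pointwise Lipschitz constant is an upper gradient along curves on which `u` is
Lipschitz. -/
theorem abs_sub_le_lintegral_lipConst {u : X → ℝ} {γ : ℝ → X} {L : ℝ} {K : ℝ≥0} (hL : 0 ≤ L)
    (hγ : LipschitzOnWith 1 γ (Icc 0 L)) (hu : LipschitzOnWith K u (γ '' Icc 0 L)) :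
    ENNReal.ofReal |u (γ 0) - u (γ L)| ≤ ∫⁻ t in Ioc 0 L, lipConst u (γ t) := by
  have hw : LipschitzOnWith (K * 1) (fun s ↦ u (γ s)) (uIcc 0 L) := by
    rw [uIcc_of_le hL]
    exact hu.comp hγ (mapsTo_image _ _)
  have hac := hw.absolutelyContinuousOnInterval
  rw [abs_sub_comm, ← hac.integral_deriv_eq_sub, intervalIntegral.integral_of_le hL,
    ← Real.norm_eq_abs, ofReal_norm]
  refine (enorm_integral_le_lintegral_enorm _).trans ?_
  refine lintegral_mono_ae ?_
  have hae := hac.ae_differentiableAt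
  rw [uIcc_of_le hL] at hae
  rw [ae_restrict_iff' measurableSet_Ioc]
  filter_upwards [hae, (Measure.ae_ne volume L)] with t ht htL htm
  rw [Real.enorm_eq_ofReal_abs]
  exact abs_deriv_le_lipConst hγ ⟨htm.1, lt_of_le_of_ne htm.2 htL⟩ (ht ⟨htm.1.le, htm.2⟩)

theorem GradPair.isUpperGradientOf {u v : X → ℝ} (h : GradPair u v) : IsUpperGradientOf v u := by
  intro L hL γ hγ
  obtain ⟨K, hK⟩ := h.lip_fun
  have h1 := abs_sub_le_lintegral_lipConst hL hγ hK.lipschitzOnWith (u := u)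
  have hcont : ContinuousOn (fun t ↦ v (γ t)) (Icc 0 L) := h.continuous_grad.comp_continuousOn hγ.continuousOn
  have hint : IntegrableOn (fun t ↦ v (γ t)) (Ioc 0 L) :=
    hcont.integrableOn_Icc.mono_set Ioc_subset_Icc_self
  rw [intervalIntegral.integral_of_le hL]
  rw [← ENNReal.ofReal_le_ofReal_iff (integral_nonneg fun t ↦ h.grad_nonneg _),
    ofReal_integral_eq_lintegral_ofReal hint (Eventually.of_forall fun t ↦ h.grad_nonneg _)]
  exact h1.trans (lintegral_mono fun t ↦ (h.ptLip _).lipConst_le (h.grad_nonneg _))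

theorem GradPair.locallyLipschitzOnSet {u v : X → ℝ} (h : GradPair u v) (W : Set X) :
    LocallyLipschitzOnSet u W := fun _ _ _ _ ↦
  ⟨_, h.lip_fun.choose_spec.lipschitzOnWith⟩

end GradPair

section Curves

variable {X : Type u} [MetricSpace X]

theorem exists_subseq_tendsto_curves [ProperSpace X] {x : X} {Λ : ℝ} (hΛ : 0 ≤ Λ) {σ : ℕ → ℝ → X}
    (hσ : ∀ n, LipschitzWith 1 (σ n)) (h0 : ∀ n, σ n 0 = x) {L : ℕ → ℝ}
    (hL : ∀ n, L n ∈ Icc 0 Λ) :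
    ∃ ℓ ∈ Icc 0 Λ, ∃ τ : ℝ → X, LipschitzWith 1 τ ∧ ∃ φ : ℕ → ℕ, StrictMono φ ∧
      Tendsto (fun n ↦ L (φ n)) atTop (𝓝 ℓ) ∧
      ∀ t ∈ Icc 0 Λ, Tendsto (fun n ↦ σ (φ n) t) atTop (𝓝 (τ t)) := by
  let I := Icc (0 : ℝ) Λ
  let z : I := ⟨0, left_mem_Icc.2 hΛ⟩
  let S : Set C(I, X) := {h | LipschitzWith 1 h ∧ h z = x}
  have hS : IsCompact S := by
    apply ArzelaAscoli.isCompact_of_equicontinuous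
    · have hc : IsCompact (Set.pi univ (fun _ : I ↦ closedBall x Λ)) :=
        isCompact_univ_pi fun _ ↦ isCompact_closedBall x Λ
      have himg : ContinuousMap.toFun '' S =
          {f : I → X | (∀ s t, dist (f s) (f t) ≤ dist s t) ∧ f z = x} := by
        ext f
        constructor
        · rintro ⟨h, hh, rfl⟩
          exact ⟨fun s t ↦ by simpa using hh.1.dist_le_mul s t, hh.2⟩
        · rintro ⟨hf, hfz⟩
          have hl : LipschitzWith 1 f := LipschitzWith.of_dist_le_mul fun s t ↦ by simpa using hf s t
          exact ⟨⟨f, hl.continuous⟩, ⟨hl, hfz⟩, rfl⟩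
      rw [himg]
      refine hc.of_isClosed_subset ?_ ?_
      · have hA : {f : I → X | ∀ s t, dist (f s) (f t) ≤ dist s t} =
            ⋂ s, ⋂ t, {f : I → X | dist (f s) (f t) ≤ dist s t} := by
          ext f
          simp
        have hA' : IsClosed {f : I → X | ∀ s t, dist (f s) (f t) ≤ dist s t} := by
          rw [hA]
          exact isClosed_iInter fun s ↦ isClosed_iInter fun t ↦
            isClosed_le ((continuous_apply s).dist (continuous_apply t)) continuous_const
        exact hA'.inter (isClosed_eq (continuous_apply z) continuous_const)
      · rintro f ⟨hf, hfz⟩ s -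
        rw [mem_closedBall, ← hfz]
        refine (hf s z).trans ?_
        rw [Subtype.dist_eq, Real.dist_eq, sub_zero, abs_of_nonneg s.2.1]
        exact s.2.2
    · refine Metric.equicontinuous_of_continuity_modulus (fun t ↦ t) tendsto_id _ ?_
      rintro s t ⟨h, hh⟩
      simpa using hh.1.dist_le_mul s t
  let F : ℕ → ℝ × C(I, X) := fun n ↦ (L n, ⟨fun t ↦ σ n t, (hσ n).continuous.comp continuous_subtype_val⟩)
  have hF : ∀ n, F n ∈ Icc (0 : ℝ) Λ ×ˢ S := fun n ↦ ⟨hL n, (by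
    have := (hσ n).comp (LipschitzWith.subtype_val I)
    rw [mul_one] at this
    exact this), h0 n⟩
  obtain ⟨⟨ℓ, h⟩, hmem, φ, hφ, hlim⟩ := (isCompact_Icc.prod hS).tendsto_subseq hF
  rw [nhds_prod_eq, tendsto_prod_iff'] at hlim
  refine ⟨ℓ, hmem.1, fun t ↦ h (projIcc 0 Λ hΛ t), ?_, φ, hφ, hlim.1, fun t ht ↦ ?_⟩
  · have := hmem.2.1.comp (LipschitzWith.projIcc hΛ)
    rw [mul_one] at this
    exact this
  · have := ((continuous_eval_const (F := C(I, X)) (⟨t, ht⟩ : I)).tendsto h).comp hlim.2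
    simp only [projIcc_of_mem hΛ ht]
    exact this

/-- The cost of travelling from `x` to `N`: all values `u (γ L) + ∫ g` over `1`-Lipschitz curves
`γ` that start at `x` and end in `N`. -/
def curveCosts (g u : X → ℝ) (N : Set X) (x : X) : Set ℝ :=
  {c | ∃ L : ℝ, 0 ≤ L ∧ ∃ γ : ℝ → X, LipschitzWith 1 γ ∧ γ 0 = x ∧ γ L ∈ N ∧
    c = u (γ L) + ∫ t in (0 : ℝ)..L, g (γ t)}

theorem lipschitzWith_concat {γ η : ℝ → X} {d : ℝ} (hγ : LipschitzWith 1 γ)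
    (hη : LipschitzWith 1 η) (h : η d = γ 0) :
    LipschitzWith 1 (fun t ↦ if t ≤ d then η t else γ (t - d)) := by
  have key : ∀ s t, s ≤ t → dist (if s ≤ d then η s else γ (s - d))
      (if t ≤ d then η t else γ (t - d)) ≤ t - s := by
    intro s t hst
    have hd : ∀ {f : ℝ → X}, LipschitzWith 1 f → ∀ a b, a ≤ b → dist (f a) (f b) ≤ b - a := by
      intro f hf a b hab
      have := hf.dist_le_mul a b
      rwa [Real.dist_eq, abs_sub_comm, abs_of_nonneg (by linarith), NNReal.coe_one, one_mul] at this
    split_ifs with h1 h2 h2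
    · exact hd hη _ _ hst
    · have e1 := hd hη s d h1
      have e2 := hd hγ 0 (t - d) (by linarith)
      rw [← h] at e2
      have := dist_triangle (η s) (η d) (γ (t - d))
      linarith
    · linarith
    · have := hd hγ (s - d) (t - d) (by linarith)
      linarith
  refine LipschitzWith.of_dist_le_mul fun s t ↦ ?_
  rw [NNReal.coe_one, one_mul, Real.dist_eq]
  rcases le_total s t with hst | hst
  · rw [abs_sub_comm, abs_of_nonneg (by linarith)]; exact key s t hst
  · rw [abs_of_nonneg (by linarith), dist_comm]; exact key t s hst

theorem IsGeodesic.exists_lipschitzWith (hG : IsGeodesic X) (x y : X) :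
    ∃ γ : ℝ → X, LipschitzWith 1 γ ∧ γ 0 = x ∧ γ (dist x y) = y := by
  obtain ⟨γ, hγ, h0, h1⟩ := hG x y
  refine ⟨fun t ↦ γ (projIcc 0 (dist x y) dist_nonneg t), ?_, ?_, ?_⟩
  · have := (hγ.to_restrict).comp (LipschitzWith.projIcc (dist_nonneg (x := x) (y := y)))
    rw [mul_one] at this
    exact this
  · simp [h0]
  · simp [h1]

variable {g u : X → ℝ} {N : Set X}

theorem bddBelow_curveCosts (hg : ∀ x, 0 ≤ g x) {T : ℝ} (hT : ∀ y ∈ N, -T ≤ u y) (x : X) :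
    -T ∈ lowerBounds (curveCosts g u N x) := by
  rintro c ⟨L, hL, γ, -, -, hN, rfl⟩
  have := intervalIntegral.integral_nonneg (μ := volume) hL (fun t _ ↦ hg (γ t))
  linarith [hT _ hN]

theorem curveCosts_nonempty (hG : IsGeodesic X) (hN : N.Nonempty) (x : X) :
    (curveCosts g u N x).Nonempty := by
  obtain ⟨y, hy⟩ := hN
  obtain ⟨γ, hγ, h0, h1⟩ := hG.exists_lipschitzWith x y
  exact ⟨_, dist x y, dist_nonneg, γ, hγ, h0, by rwa [h1], rfl⟩

theorem sInf_curveCosts_le (hg : ∀ x, 0 ≤ g x) {T : ℝ} (hT : ∀ y ∈ N, -T ≤ u y) {x : X}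
    (hx : x ∈ N) : sInf (curveCosts g u N x) ≤ u x :=
  csInf_le ⟨_, bddBelow_curveCosts hg hT x⟩
    ⟨0, le_rfl, fun _ ↦ x, LipschitzWith.const' x |>.weaken zero_le_one, rfl, hx, by simp⟩

theorem sInf_curveCosts_le_add (hG : IsGeodesic X) (hN : N.Nonempty) (hgc : Continuous g)
    (hg : ∀ x, 0 ≤ g x) {T : ℝ} (hT : ∀ y ∈ N, -T ≤ u y) {x y : X} {c : ℝ}
    (hc : ∀ z ∈ closedBall x (dist y x), g z ≤ c) :
    sInf (curveCosts g u N y) ≤ sInf (curveCosts g u N x) + c * dist y x := by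
  rw [← sub_le_iff_le_add]
  refine le_csInf (curveCosts_nonempty hG hN x) ?_
  rintro b ⟨L, hL, γ, hγ, h0, hLN, rfl⟩
  rw [sub_le_iff_le_add]
  obtain ⟨η, hη, hη0, hη1⟩ := hG.exists_lipschitzWith y x
  set d := dist y x with hd
  have hd0 : 0 ≤ d := dist_nonneg
  set ζ : ℝ → X := fun t ↦ if t ≤ d then η t else γ (t - d) with hζ
  have hζl : LipschitzWith 1 ζ := lipschitzWith_concat hγ hη (hη1.trans h0.symm)
  have hζγ : ∀ t, 0 ≤ t → ζ (t + d) = γ t := by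
    intro t ht
    rcases ht.eq_or_lt with rfl | ht
    · simp [hζ, hη1, h0]
    · simp [hζ, ht]
  have hend : ζ (L + d) = γ L := hζγ L hL
  have hgi : ∀ a b, IntervalIntegrable (fun t ↦ g (ζ t)) volume a b := fun a b ↦
    (hgc.comp hζl.continuous).intervalIntegrable a b
  have hmem : u (γ L) + ∫ t in (0 : ℝ)..(L + d), g (ζ t) ∈ curveCosts g u N y :=
    ⟨L + d, by linarith, ζ, hζl, by simp [hζ, hd0, hη0], by rwa [hend], by rw [hend]⟩
  refine (csInf_le ⟨_, bddBelow_curveCosts hg hT y⟩ hmem).trans ?_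
  have e1 : ∫ t in d..(L + d), g (ζ t) = ∫ t in (0 : ℝ)..L, g (γ t) := by
    have := intervalIntegral.integral_comp_add_right (a := 0) (b := L) (fun t ↦ g (ζ t)) d
    rw [zero_add] at this
    rw [← this]
    refine intervalIntegral.integral_congr fun t ht ↦ ?_
    rw [uIcc_of_le hL] at ht
    simp only [hζγ t ht.1]
  have e2 : ∫ t in (0 : ℝ)..d, g (ζ t) ≤ c * d := by
    have : ∫ t in (0 : ℝ)..d, g (ζ t) ≤ ∫ t in (0 : ℝ)..d, c := by
      refine intervalIntegral.integral_mono_on hd0 (hgi _ _) (by simp) fun t ht ↦ hc _ ?_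
      have e : ζ t = η t := by simp [hζ, ht.2]
      rw [e, mem_closedBall, ← hη1]
      have := hη.dist_le_mul t d
      rw [Real.dist_eq, abs_sub_comm, abs_of_nonneg (by linarith [ht.2]), NNReal.coe_one, one_mul] at this
      linarith [ht.1]
    refine this.trans_eq ?_
    simp [mul_comm]
  rw [← intervalIntegral.integral_add_adjacent_intervals (hgi 0 d) (hgi d (L + d)), e1]
  linarith

theorem gradPair_curveCosts (hG : IsGeodesic X) (hN : N.Nonempty) {K : ℝ≥0} (hgl : LipschitzWith K g)
    (hg : ∀ x, 0 ≤ g x) {M : ℝ} (hM : ∀ x, g x ≤ M) {T : ℝ} (hT : ∀ y ∈ N, -T ≤ u y) :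
    GradPair (fun x ↦ min T (sInf (curveCosts g u N x))) g := by
  set f : X → ℝ := fun x ↦ sInf (curveCosts g u N x) with hf
  have hM0 : 0 ≤ M := (hg hN.choose).trans (hM _)
  have hfl : LipschitzWith M.toNNReal f := by
    refine LipschitzWith.of_le_add_mul _ fun x y ↦ ?_
    rw [Real.coe_toNNReal _ hM0]
    exact sInf_curveCosts_le_add hG hN hgl.continuous hg hT fun z _ ↦ hM z
  have hlow : ∀ x, -T ≤ f x := fun x ↦
    le_csInf (curveCosts_nonempty hG hN x) (bddBelow_curveCosts hg hT x)
  refine ⟨⟨_, hfl.const_min T⟩, ⟨K, hgl⟩, ⟨|T|, fun x ↦ ?_⟩, ⟨M, hM⟩, hg, fun x ε hε ↦ ?_⟩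
  · rw [abs_le]
    refine ⟨le_min (neg_abs_le T) ?_, (min_le_left _ _).trans (le_abs_self T)⟩
    exact (neg_le_neg (le_abs_self T)).trans (hlow x)
  · obtain ⟨δ, hδ, hball⟩ := Metric.eventually_nhds_iff_ball.1
      (hgl.continuous.continuousAt.eventually (gt_mem_nhds (show g x < g x + ε by linarith)) :
        ∀ᶠ z in 𝓝 x, g z < g x + ε)
    filter_upwards [ball_mem_nhds x (half_pos hδ)] with y hy
    have h1 : f y ≤ f x + (g x + ε) * dist y x :=
      sInf_curveCosts_le_add hG hN hgl.continuous hg hT fun z hz ↦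
        (hball z (by rw [mem_closedBall] at hz; rw [mem_ball] at *; linarith)).le
    have h2 : f x ≤ f y + (g x + ε) * dist x y :=
      sInf_curveCosts_le_add hG hN hgl.continuous hg hT fun z hz ↦
        (hball z (by
          rw [mem_closedBall] at hz; rw [mem_ball] at *
          have := dist_triangle z y x
          rw [dist_comm x y] at hz
          linarith)).le
    rw [dist_comm x y] at h2
    refine (abs_min_sub_min_le_max T (f y) T (f x)).trans ?_
    rw [sub_self, abs_zero, max_eq_right (abs_nonneg _), abs_le]
    constructor <;> linarith

end Curves

section LipMeasurable

variable {X : Type u} [MetricSpace X]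

theorem lowerSemicontinuous_indicator_difference {u : X → ℝ} {W : Set X} (hW : IsOpen W)
    (hu : ContinuousOn u W) (q : ℝ) :
    LowerSemicontinuous (W.indicator fun x ↦ ⨆ y ∈ ball x q ∩ W, ENNReal.ofReal (|u y - u x| / q)) := by
  intro x c hc
  by_cases hx : x ∈ W
  · rw [indicator_of_mem hx] at hc
    simp only [lt_iSup_iff] at hc
    obtain ⟨y, hy, hcy⟩ := hc
    have hcont : ContinuousAt (fun x' ↦ ENNReal.ofReal (|u y - u x'| / q)) x :=
      ENNReal.continuous_ofReal.continuousAt.comp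
        ((continuousAt_const.sub (hu.continuousAt (hW.mem_nhds hx))).abs.div_const q)
    have hd : ∀ᶠ x' in 𝓝 x, y ∈ ball x' q :=
      (continuousAt_const.dist continuousAt_id).eventually (gt_mem_nhds (mem_ball.1 hy.1))
    filter_upwards [hW.mem_nhds hx, hcont.eventually (lt_mem_nhds hcy), hd] with x' h1 h2 h3
    rw [indicator_of_mem h1]
    simp only [lt_iSup_iff]
    exact ⟨y, ⟨h3, hy.2⟩, h2⟩
  · simp [indicator_of_notMem hx] at hc

theorem exists_measurable_eq_lipConst [MeasurableSpace X] [BorelSpace X] {u : X → ℝ} {W : Set X}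
    (hW : IsOpen W) (hu : ContinuousOn u W) :
    ∃ m : X → ℝ≥0∞, Measurable m ∧ ∀ x ∈ W, m x = lipConst u x := by
  set s : ℝ → X → ℝ≥0∞ := fun q ↦
    W.indicator fun x ↦ ⨆ y ∈ ball x q ∩ W, ENNReal.ofReal (|u y - u x| / q) with hs
  have hsm : ∀ q, Measurable (s q) := fun q ↦
    (lowerSemicontinuous_indicator_difference hW hu q).measurable
  refine ⟨fun x ↦ ⨆ n : ℕ, ⨅ q : {q : ℚ // 0 < q ∧ (q : ℝ) < 1 / (n + 1)}, s q x,
    .iSup fun n ↦ .iInf fun q ↦ hsm _, fun x hx ↦ ?_⟩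
  have hsx : ∀ q, s q x = ⨆ y ∈ ball x q ∩ W, ENNReal.ofReal (|u y - u x| / q) := fun q ↦
    indicator_of_mem hx _
  refine le_antisymm ?_ ?_
  · refine le_of_forall_lt fun c hc ↦ ?_
    obtain ⟨c', hcc', hc'⟩ := exists_between hc
    obtain ⟨n, hn⟩ := lt_iSup_iff.1 hc'
    refine hcc'.trans_le ?_
    refine le_liminf_of_le (by isBoundedDefault) ?_
    filter_upwards [Ioo_mem_nhdsGT (show (0 : ℝ) < 1 / (n + 1) by positivity)] with r hr
    by_contra! hlt
    have hr0 : ENNReal.ofReal r ≠ 0 := by simpa using hr.1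
    have hmul : (⨆ y ∈ ball x r, ENNReal.ofReal (|u y - u x| / r)) * ENNReal.ofReal r <
        c' * ENNReal.ofReal r := by
      rwa [ENNReal.mul_lt_mul_iff_left hr0 ENNReal.ofReal_ne_top]
    have hcont : Tendsto (fun q : ℝ ↦ c' * ENNReal.ofReal q) (𝓝 r) (𝓝 (c' * ENNReal.ofReal r)) :=
      ENNReal.Tendsto.const_mul (ENNReal.continuous_ofReal.tendsto r) (Or.inl (by simpa using hr0))
    obtain ⟨δ, hδ, hball⟩ := Metric.eventually_nhds_iff_ball.1
      (hcont.eventually (lt_mem_nhds hmul))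
    obtain ⟨q, hq1, hq2⟩ := exists_rat_btwn (max_lt (show r - δ < r by linarith) hr.1)
    rw [max_lt_iff] at hq1
    have hq := hball q (by rw [mem_ball, Real.dist_eq, abs_sub_lt_iff]; constructor <;> linarith)
    have h1 : c' < s q x :=
      hn.trans_le (iInf_le _ (⟨q, by exact_mod_cast hq1.2, hq2.trans hr.2⟩ :
        {q : ℚ // 0 < q ∧ (q : ℝ) < 1 / (n + 1)}))
    rw [hsx] at h1
    simp only [lt_iSup_iff] at h1
    obtain ⟨y, hy, hcy⟩ := h1
    refine absurd hq (not_lt.2 ?_)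
    calc c' * ENNReal.ofReal q ≤ ENNReal.ofReal (|u y - u x| / q) * ENNReal.ofReal q := by
          gcongr
      _ = ENNReal.ofReal (|u y - u x| / r) * ENNReal.ofReal r := by
          rw [← ENNReal.ofReal_mul (by have := hq1.2; positivity),
            ← ENNReal.ofReal_mul (by have := hr.1; positivity), div_mul_cancel₀ _ hq1.2.ne',
            div_mul_cancel₀ _ hr.1.ne']
      _ ≤ _ := by
          gcongr
          exact le_iSup₂ (f := fun y _ ↦ ENNReal.ofReal (|u y - u x| / r)) y
            (ball_subset_ball hq2.le hy.1)
  · refine le_of_forall_lt fun c hc ↦ ?_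
    obtain ⟨c', hcc', hc'⟩ := exists_between hc
    obtain ⟨δ, hδ, hball⟩ := Metric.isOpen_iff.1 hW x hx
    obtain ⟨δ', hδ', hlip⟩ := mem_nhdsGT_iff_exists_Ioo_subset.1 (eventually_lt_of_lt_liminf hc')
    obtain ⟨n, hn⟩ := exists_nat_one_div_lt (lt_min hδ hδ')
    rw [lt_min_iff] at hn
    refine hcc'.trans_le (le_iSup_of_le n (le_iInf fun q ↦ ?_))
    have h1 := hlip (show (q : ℝ) ∈ Ioo 0 δ' from ⟨by exact_mod_cast q.2.1, q.2.2.trans hn.2⟩)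
    rw [hsx, inter_eq_left.2 ((ball_subset_ball (q.2.2.trans hn.1).le).trans hball)]
    exact le_of_lt h1

end LipMeasurable

section LscApprox

variable {X : Type u} [MetricSpace X]

/-- A lower semicontinuous function with a positive lower bound is an increasing limit of bounded
Lipschitz functions with the same lower bound. -/
theorem exists_lipschitz_approx {g : X → ℝ≥0∞} (hg : LowerSemicontinuous g) {η : ℝ} (hη : 0 < η)
    (hgη : ∀ x, ENNReal.ofReal η ≤ g x) :
    ∃ G : ℕ → X → ℝ, (∀ n, ∃ L : ℝ≥0, LipschitzWith L (G n)) ∧ (∀ n, ∃ M, ∀ x, G n x ≤ M) ∧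
      (∀ n x, η ≤ G n x) ∧ (∀ x, Monotone fun n ↦ G n x) ∧
      ∀ x, ⨆ n, ENNReal.ofReal (G n x) = g x := by
  set h : ℕ → X → ℝ≥0∞ := fun n x ↦ ⨅ y, (min (g y) (ENNReal.ofReal (η + n)) + n * edist x y) with hh
  have hle : ∀ n x, h n x ≤ min (g x) (ENNReal.ofReal (η + n)) := fun n x ↦
    (iInf_le _ x).trans (by simp)
  have hfin : ∀ n x, h n x ≠ ⊤ := fun n x ↦
    ne_top_of_le_ne_top ENNReal.ofReal_ne_top ((hle n x).trans (min_le_right _ _))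
  have hge : ∀ n x, ENNReal.ofReal η ≤ h n x := fun n x ↦ le_iInf fun y ↦
    le_add_right (le_min (hgη y) (ENNReal.ofReal_le_ofReal (by simp)))
  have hmono : ∀ x, Monotone fun n ↦ h n x := by
    intro x n m hnm
    refine iInf_mono fun y ↦ ?_
    have : (n : ℝ) ≤ m := by exact_mod_cast hnm
    gcongr
  have hlip : ∀ n x x', h n x ≤ h n x' + n * edist x x' := by
    intro n x x'
    rw [hh, ENNReal.iInf_add]
    refine le_iInf fun y ↦ (iInf_le _ y).trans ?_
    rw [add_assoc, ← mul_add]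
    gcongr
    rw [add_comm]
    exact edist_triangle _ _ _
  refine ⟨fun n x ↦ (h n x).toReal, fun n ↦ ⟨n, LipschitzWith.of_le_add_mul _ fun x y ↦ ?_⟩,
    fun n ↦ ⟨η + n, fun x ↦ ?_⟩, fun n x ↦ ?_, fun x n m hnm ↦ ?_, fun x ↦ ?_⟩
  · have := ENNReal.toReal_mono (by finiteness [hfin n y, edist_ne_top x y]) (hlip n x y)
    rwa [ENNReal.toReal_add (hfin n y) (by finiteness), ENNReal.toReal_mul, edist_dist,
      ENNReal.toReal_ofReal dist_nonneg, ENNReal.toReal_natCast] at this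
  · have := ENNReal.toReal_mono ENNReal.ofReal_ne_top ((hle n x).trans (min_le_right _ _))
    rwa [ENNReal.toReal_ofReal (by positivity)] at this
  · have := ENNReal.toReal_mono (hfin n x) (hge n x)
    rwa [ENNReal.toReal_ofReal hη.le] at this
  · exact ENNReal.toReal_mono (hfin m x) (hmono x hnm)
  · simp only [ENNReal.ofReal_toReal (hfin _ x)]
    refine le_antisymm (iSup_le fun n ↦ (hle n x).trans (min_le_left _ _)) ?_
    refine le_of_forall_lt fun c hc ↦ ?_
    obtain ⟨c', hcc', hc'⟩ := exists_between hc
    obtain ⟨δ, hδ, hball⟩ := Metric.eventually_nhds_iff_ball.1 (hg x c' hc')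
    have hc'top : c' ≠ ⊤ := hc'.ne_top
    obtain ⟨n, hn⟩ := exists_nat_ge (max c'.toReal (c'.toReal / δ))
    rw [max_le_iff] at hn
    refine hcc'.trans_le (le_iSup_of_le n (le_iInf fun y ↦ ?_))
    by_cases hy : y ∈ ball x δ
    · refine le_add_right (le_min (hball y hy).le ?_)
      rw [← ENNReal.ofReal_toReal hc'top]
      exact ENNReal.ofReal_le_ofReal (by linarith [hn.1])
    · refine le_add_left ?_
      rw [mem_ball, not_lt, dist_comm] at hy
      rw [edist_dist, ← ENNReal.ofReal_natCast, ← ENNReal.ofReal_mul (by positivity),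
        ← ENNReal.ofReal_toReal hc'top]
      refine ENNReal.ofReal_le_ofReal ?_
      rw [div_le_iff₀ hδ] at hn
      exact hn.2.trans (by gcongr)

end LscApprox

section Convergence

variable {X : Type u} [MetricSpace X]

theorem sInf_curveCosts_mono (hG : IsGeodesic X) {g g' u : X → ℝ} {N : Set X} (hN : N.Nonempty)
    (hgc : Continuous g) (hg : ∀ x, 0 ≤ g x) (hgc' : Continuous g') (hgg' : ∀ x, g x ≤ g' x) {T : ℝ}
    (hT : ∀ y ∈ N, -T ≤ u y) (x : X) :
    sInf (curveCosts g u N x) ≤ sInf (curveCosts g' u N x) := by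
  refine le_csInf (curveCosts_nonempty hG hN x) ?_
  rintro c ⟨L, hL, γ, hγ, h0, hLN, rfl⟩
  refine (csInf_le ⟨_, bddBelow_curveCosts hg hT x⟩ ⟨L, hL, γ, hγ, h0, hLN, rfl⟩).trans ?_
  gcongr
  exact intervalIntegral.integral_mono_on hL ((hgc.comp hγ.continuous).intervalIntegrable _ _)
    ((hgc'.comp hγ.continuous).intervalIntegrable _ _) fun t _ ↦ hgg' (γ t)

/-- If every `G m` has integral at most `c` along `τ`, and the `G m` increase to a function that is
infinite off the closed set `N`, then `τ` stays in `N` and the limit has integral at most `c`. -/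
theorem curve_mem_and_lintegral_le {N : Set X} (hN : IsClosed N) {g : X → ℝ≥0∞} {G : ℕ → X → ℝ}
    (hGc : ∀ n, Continuous (G n)) (hG0 : ∀ n x, 0 ≤ G n x) (hmono : ∀ x, Monotone fun n ↦ G n x)
    (hsup : ∀ x, ⨆ n, ENNReal.ofReal (G n x) = g x) (hgN : ∀ x ∉ N, g x = ⊤)
    {τ : ℝ → X} (hτ : Continuous τ) {ℓ c : ℝ} (hℓ : 0 ≤ ℓ) (h0 : τ 0 ∈ N) (h1 : τ ℓ ∈ N)
    (hc : ∀ m, ∫ t in (0 : ℝ)..ℓ, G m (τ t) ≤ c) :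
    (∀ t ∈ Icc 0 ℓ, τ t ∈ N) ∧ ∫⁻ t in Ioc 0 ℓ, g (τ t) ≤ ENNReal.ofReal c := by
  have hmeas : ∀ m, Measurable fun t ↦ ENNReal.ofReal (G m (τ t)) := fun m ↦
    ((hGc m).comp hτ).measurable.ennreal_ofReal
  have hint : ∫⁻ t in Ioc 0 ℓ, g (τ t) ≤ ENNReal.ofReal c := by
    simp only [← hsup]
    rw [lintegral_iSup hmeas fun m n hmn t ↦ ENNReal.ofReal_le_ofReal (hmono _ hmn)]
    refine iSup_le fun m ↦ ?_
    have hi : IntegrableOn (fun t ↦ G m (τ t)) (Ioc 0 ℓ) :=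
      (((hGc m).comp hτ).intervalIntegrable 0 ℓ).1
    rw [← ofReal_integral_eq_lintegral_ofReal hi (ae_of_all _ fun t ↦ hG0 _ _),
      ← intervalIntegral.integral_of_le hℓ]
    exact ENNReal.ofReal_le_ofReal (hc m)
  refine ⟨?_, hint⟩
  have hgm : Measurable fun t ↦ g (τ t) := by
    simp only [← hsup]
    exact .iSup hmeas
  have hae : ∀ᵐ t ∂volume.restrict (Ioc 0 ℓ), g (τ t) < ⊤ :=
    ae_lt_top hgm (ne_top_of_le_ne_top ENNReal.ofReal_ne_top hint)
  have hopen : IsOpen (Ioo 0 ℓ ∩ τ ⁻¹' Nᶜ) := isOpen_Ioo.inter (hN.isOpen_compl.preimage hτ)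
  have hnull : volume (Ioo 0 ℓ ∩ τ ⁻¹' Nᶜ) = 0 := by
    rw [ae_restrict_iff' measurableSet_Ioc] at hae
    refine measure_mono_null (fun t ht ↦ ?_) (ae_iff.1 hae)
    have := hgN _ ht.2
    simp [this, ht.1.1, ht.1.2.le]
  have hempty := hopen.measure_eq_zero_iff volume |>.1 hnull
  intro t ht
  rcases ht.1.eq_or_lt with rfl | ht0
  · exact h0
  rcases ht.2.eq_or_lt with rfl | htℓ
  · exact h1
  by_contra hn
  exact (hempty ▸ (⟨⟨ht0, htℓ⟩, hn⟩ : t ∈ Ioo 0 ℓ ∩ τ ⁻¹' Nᶜ) : t ∈ (∅ : Set ℝ))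

theorem exists_sub_le_sInf_curveCosts [ProperSpace X] {N : Set X} (hN : IsClosed N)
    {g : X → ℝ≥0∞} {G : ℕ → X → ℝ} (hGc : ∀ n, Continuous (G n)) (hGb : ∀ n, ∃ M, ∀ x, G n x ≤ M)
    {η : ℝ} (hη : 0 < η) (hGη : ∀ n x, η ≤ G n x) (hmono : ∀ x, Monotone fun n ↦ G n x)
    (hsup : ∀ x, ⨆ n, ENNReal.ofReal (G n x) = g x) (hgN : ∀ x ∉ N, g x = ⊤)
    (hG : IsGeodesic X)
    {u : X → ℝ} {K : ℝ≥0} (hu : LipschitzOnWith K u N) (hug : ∀ x ∈ N, lipConst u x ≤ g x)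
    {T : ℝ} (hT : ∀ y ∈ N, -T ≤ u y) {x : X} (hx : x ∈ N) {ε : ℝ} (hε : 0 < ε) :
    ∃ n, u x - ε ≤ sInf (curveCosts (G n) u N x) := by
  by_contra! hlt
  have hG0 : ∀ n x, 0 ≤ G n x := fun n x ↦ hη.le.trans (hGη n x)
  have : ∀ n, ∃ L : ℝ, 0 ≤ L ∧ ∃ γ : ℝ → X, LipschitzWith 1 γ ∧ γ 0 = x ∧ γ L ∈ N ∧
      u (γ L) + ∫ t in (0 : ℝ)..L, G n (γ t) < u x - ε := by
    intro n
    obtain ⟨c, ⟨L, hL, γ, hγ, h0, h1, rfl⟩, hc⟩ :=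
      exists_lt_of_csInf_lt (curveCosts_nonempty hG ⟨x, hx⟩ x) (hlt n)
    exact ⟨L, hL, γ, hγ, h0, h1, hc⟩
  choose L hL γ hγ h0 h1 hc using this
  have hi : ∀ m {τ : ℝ → X}, LipschitzWith 1 τ → ∀ a b,
      IntervalIntegrable (fun t ↦ G m (τ t)) volume a b := fun m τ hτ a b ↦
    ((hGc m).comp hτ.continuous).intervalIntegrable a b
  set Λ := (u x - ε + T) / η with hΛ
  have hLΛ : ∀ n, L n ∈ Icc 0 Λ := by
    refine fun n ↦ ⟨hL n, ?_⟩
    rw [hΛ, le_div_iff₀ hη]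
    have e1 : ∫ t in (0 : ℝ)..L n, η ≤ ∫ t in (0 : ℝ)..L n, G n (γ n t) :=
      intervalIntegral.integral_mono_on (hL n) (by simp) (hi n (hγ n) _ _) fun t _ ↦ hGη _ _
    simp only [intervalIntegral.integral_const, sub_zero, smul_eq_mul] at e1
    linarith [hc n, hT _ (h1 n)]
  obtain ⟨ℓ, hℓ, τ, hτ, φ, hφ, hLφ, hlim⟩ :=
    exists_subseq_tendsto_curves ((hL 0).trans (hLΛ 0).2) hγ h0 hLΛ
  have hend : Tendsto (fun n ↦ γ (φ n) (L (φ n))) atTop (𝓝 (τ ℓ)) := by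
    rw [tendsto_iff_dist_tendsto_zero]
    have e1 := tendsto_iff_dist_tendsto_zero.1 (hlim ℓ hℓ)
    have e2 := tendsto_iff_dist_tendsto_zero.1 hLφ
    refine squeeze_zero (fun _ ↦ dist_nonneg) (fun n ↦ ?_) (by simpa using e2.add e1)
    have := (hγ (φ n)).dist_le_mul (L (φ n)) ℓ
    rw [NNReal.coe_one, one_mul] at this
    exact (dist_triangle _ (γ (φ n) ℓ) _).trans (by gcongr)
  have hτ0 : τ 0 = x :=
    tendsto_nhds_unique (hlim 0 (left_mem_Icc.2 (hℓ.1.trans hℓ.2))) (by simp [h0])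
  have hτN : τ ℓ ∈ N := hN.mem_of_tendsto hend (.of_forall fun n ↦ h1 _)
  have huend : Tendsto (fun n ↦ u (γ (φ n) (L (φ n)))) atTop (𝓝 (u (τ ℓ))) :=
    (hu.continuousOn _ hτN).tendsto.comp
      (tendsto_nhdsWithin_iff.2 ⟨hend, .of_forall fun n ↦ h1 _⟩)
  have hbound : ∀ m, ∫ t in (0 : ℝ)..ℓ, G m (τ t) ≤ u x - ε - u (τ ℓ) := by
    intro m
    obtain ⟨M, hM⟩ := hGb m
    have hlim1 : Tendsto (fun n ↦ ∫ t in (0 : ℝ)..ℓ, G m (γ (φ n) t)) atTop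
        (𝓝 (∫ t in (0 : ℝ)..ℓ, G m (τ t))) := by
      refine intervalIntegral.tendsto_integral_filter_of_dominated_convergence (fun _ ↦ M)
        (.of_forall fun n ↦ ((hGc m).comp (hγ _).continuous).aestronglyMeasurable)
        (.of_forall fun n ↦ ae_of_all _ fun t _ ↦ ?_) (by simp) (ae_of_all _ fun t ht ↦ ?_)
      · rw [Real.norm_of_nonneg (hG0 _ _)]; exact hM _
      · rw [uIoc_of_le hℓ.1] at ht
        exact ((hGc m).tendsto _).comp (hlim t ⟨ht.1.le, ht.2.trans hℓ.2⟩)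
    have hlim2 : Tendsto (fun n ↦ u x - ε - u (γ (φ n) (L (φ n))) + M * |ℓ - L (φ n)|) atTop
        (𝓝 (u x - ε - u (τ ℓ) + M * |ℓ - ℓ|)) :=
      (tendsto_const_nhds.sub huend).add ((tendsto_const_nhds.sub hLφ).abs.const_mul M)
    rw [sub_self, abs_zero, mul_zero, add_zero] at hlim2
    refine le_of_tendsto_of_tendsto hlim1 hlim2 ?_
    filter_upwards [eventually_ge_atTop m] with n hn
    have e1 : ∫ t in L (φ n)..ℓ, G m (γ (φ n) t) ≤ M * |ℓ - L (φ n)| := by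
      refine (Real.le_norm_self _).trans (intervalIntegral.norm_integral_le_of_norm_le_const fun t _ ↦ ?_)
      rw [Real.norm_of_nonneg (hG0 _ _)]; exact hM _
    have e2 : ∫ t in (0 : ℝ)..L (φ n), G m (γ (φ n) t) ≤
        ∫ t in (0 : ℝ)..L (φ n), G (φ n) (γ (φ n) t) :=
      intervalIntegral.integral_mono_on (hL _) (hi _ (hγ _) _ _) (hi _ (hγ _) _ _)
        fun t _ ↦ hmono _ (hn.trans (hφ.id_le n))
    have e3 := intervalIntegral.integral_add_adjacent_intervals
      (hi m (hγ (φ n)) 0 (L (φ n))) (hi m (hγ (φ n)) (L (φ n)) ℓ)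
    linarith [hc (φ n)]
  obtain ⟨hmem, hint⟩ := curve_mem_and_lintegral_le hN hGc hG0 hmono hsup hgN hτ.continuous hℓ.1
    (by rwa [hτ0]) hτN hbound
  have hkey := abs_sub_le_lintegral_lipConst (u := u) hℓ.1 hτ.lipschitzOnWith
    (hu.mono (image_subset_iff.2 hmem))
  rw [hτ0] at hkey
  have hle : ENNReal.ofReal |u x - u (τ ℓ)| ≤ ENNReal.ofReal (u x - ε - u (τ ℓ)) := by
    refine hkey.trans (le_trans (setLIntegral_mono' measurableSet_Ioc fun t ht ↦ ?_) hint)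
    exact hug _ (hmem t ⟨ht.1.le, ht.2⟩)
  have hpos : 0 ≤ ∫ t in (0 : ℝ)..ℓ, G 0 (τ t) :=
    intervalIntegral.integral_nonneg (μ := volume) hℓ.1 fun t _ ↦ hG0 _ _
  have h2 := hbound 0
  rw [ENNReal.ofReal_le_ofReal_iff (hpos.trans h2)] at hle
  linarith [le_abs_self (u x - u (τ ℓ))]

end Convergence

section KeyLemma

variable {X : Type u} [MetricSpace X]

theorem gradPair_zero : GradPair (fun _ : X ↦ (0 : ℝ)) (fun _ ↦ 0) where
  lip_fun := ⟨0, LipschitzWith.const 0⟩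
  lip_grad := ⟨0, LipschitzWith.const 0⟩
  bdd_fun := ⟨0, by simp⟩
  bdd_grad := ⟨0, by simp⟩
  grad_nonneg := by simp
  ptLip x ε hε := .of_forall fun y ↦ by simp; positivity

variable [MeasurableSpace X] [BorelSpace X]

theorem exists_gradPair_of_locallyLipschitz [ProperSpace X] (hG : IsGeodesic X) {μ : Measure X}
    [IsLocallyFiniteMeasure μ] {W K : Set X} (hW : IsOpen W) (hK : IsCompact K) (hKW : K ⊆ W)
    {u : X → ℝ} (hu : LocallyLipschitzOnSet u W) {ε : ℝ≥0∞} (hε : ε ≠ 0) :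
    ∃ w v : X → ℝ, GradPair w v ∧
      ∫⁻ x in K, ENNReal.ofReal (v x) ∂μ ≤ (∫⁻ x in W, lipConst u x ∂μ) + ε ∧
      ∫⁻ x in K, ENNReal.ofReal |w x - u x| ∂μ ≤ ε := by
  classical
  rcases K.eq_empty_or_nonempty with rfl | hKne
  · exact ⟨_, _, gradPair_zero, by simp, by simp⟩
  have huc : ContinuousOn u W := by
    intro x hx
    obtain ⟨δ, hδ, hball⟩ := Metric.nhds_basis_closedBall.mem_iff.1 (hW.mem_nhds hx)
    obtain ⟨L, hL⟩ := hu _ isClosed_closedBall isBounded_closedBall hball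
    exact (hL.continuousOn.continuousAt (closedBall_mem_nhds x hδ)).continuousWithinAt
  obtain ⟨L, hL⟩ := hu K hK.isClosed hK.isBounded hKW
  obtain ⟨T, hT⟩ := hK.exists_bound_of_continuousOn (huc.mono hKW)
  simp only [Real.norm_eq_abs] at hT
  obtain ⟨m, hm, hmu⟩ := exists_measurable_eq_lipConst hW huc
  have hε2 : ε / 2 ≠ 0 := by simpa using hε
  obtain ⟨η, hη, hημ⟩ := ENNReal.exists_nnreal_pos_mul_lt (hK.measure_lt_top (μ := μ)).ne hε2
  have hKm := hK.isClosed.measurableSet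
  obtain ⟨g, hpg, hg, hgint⟩ := exists_le_lowerSemicontinuous_lintegral_ge μ
    (K.indicator fun x ↦ m x + η) ((hm.add_const _).indicator hKm) hε2
  set g' : X → ℝ≥0∞ := fun x ↦ if x ∈ K then g x else ⊤ with hg'
  have hgK : ∀ x ∈ K, lipConst u x + η ≤ g x := fun x hx ↦ by
    have := hpg x
    rwa [indicator_of_mem hx, hmu x (hKW hx)] at this
  have hg'l : LowerSemicontinuous g' := by
    intro x c hc
    by_cases hx : x ∈ K
    · simp only [hg', hx, if_true] at hc
      filter_upwards [hg x c hc] with y hy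
      simp only [hg']
      split_ifs
      · exact hy
      · exact hc.trans_le le_top
    · filter_upwards [hK.isClosed.isOpen_compl.mem_nhds hx] with y hy
      simp only [hg', hx, if_false] at hc
      exact hc.trans_eq (if_neg hy).symm
  have hg'η : ∀ x, ENNReal.ofReal η ≤ g' x := by
    intro x
    simp only [hg', ENNReal.ofReal_coe_nnreal]
    split_ifs with hx
    · exact le_add_self.trans (hgK x hx)
    · exact le_top
  obtain ⟨G, hGl, hGb, hGη, hmono, hsup⟩ :=
    exists_lipschitz_approx hg'l (show (0 : ℝ) < η by exact_mod_cast hη) hg'η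
  have hηpos : (0 : ℝ) < η := by exact_mod_cast hη
  have hG0 : ∀ n x, 0 ≤ G n x := fun n x ↦ hηpos.le.trans (hGη n x)
  have hGc : ∀ n, Continuous (G n) := fun n ↦ (hGl n).choose_spec.continuous
  have hlow : ∀ y ∈ K, -T ≤ u y := fun y hy ↦ (abs_le.1 (hT y hy)).1
  set w : ℕ → X → ℝ := fun n x ↦ min T (sInf (curveCosts (G n) u K x)) with hw
  have hpair : ∀ n, GradPair (w n) (G n) := fun n ↦ by
    obtain ⟨M, hM⟩ := hGb n
    exact gradPair_curveCosts hG hKne (hGl n).choose_spec (hG0 n) hM hlow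
  have hvint : ∀ n, ∫⁻ x in K, ENNReal.ofReal (G n x) ∂μ ≤ (∫⁻ x in W, lipConst u x ∂μ) + ε := by
    intro n
    calc ∫⁻ x in K, ENNReal.ofReal (G n x) ∂μ ≤ ∫⁻ x in K, g x ∂μ := by
          refine setLIntegral_mono' hKm fun x hx ↦ ?_
          have : g' x = g x := by simp [hg', hx]
          rw [← this, ← hsup x]
          exact le_iSup (fun n ↦ ENNReal.ofReal (G n x)) n
      _ ≤ ∫⁻ x, g x ∂μ := setLIntegral_le_lintegral _ _
      _ ≤ (∫⁻ x in K, m x + η ∂μ) + ε / 2 := by rwa [lintegral_indicator hKm] at hgint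
      _ = (∫⁻ x in K, m x ∂μ) + η * μ K + ε / 2 := by
          rw [lintegral_add_left hm, setLIntegral_const]
      _ ≤ (∫⁻ x in W, lipConst u x ∂μ) + ε / 2 + ε / 2 := by
          refine add_le_add (add_le_add ?_ hημ.le) le_rfl
          rw [setLIntegral_congr_fun hKm fun x hx ↦ hmu x (hKW hx)]
          exact lintegral_mono_set hKW
      _ = _ := by rw [add_assoc, ENNReal.add_halves]
  have hwK : ∀ n, ∀ x ∈ K, w n x ≤ u x ∧ -T ≤ w n x := fun n x hx ↦
    ⟨(min_le_right _ _).trans (sInf_curveCosts_le (hG0 n) hlow hx),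
      le_min (by linarith [abs_nonneg (u x), hT x hx])
        (le_csInf (curveCosts_nonempty hG hKne x) (bddBelow_curveCosts (hG0 n) hlow x))⟩
  have hlim : ∀ x ∈ K, Tendsto (fun n ↦ ENNReal.ofReal |w n x - u x|) atTop (𝓝 0) := by
    intro x hx
    have : Tendsto (fun n ↦ w n x) atTop (𝓝 (u x)) := by
      refine tendsto_order.2 ⟨fun a ha ↦ ?_, fun a ha ↦ .of_forall fun n ↦ (hwK n x hx).1.trans_lt ha⟩
      have hgN : ∀ x ∉ K, g' x = ⊤ := fun x hx ↦ by simp [hg', hx]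
      obtain ⟨n₀, hn₀⟩ := exists_sub_le_sInf_curveCosts hK.isClosed hGc hGb hηpos hGη hmono hsup
        hgN hG hL (fun y hy ↦ by
          simp only [hg', hy, if_true]; exact (le_add_right le_rfl).trans (hgK y hy)) hlow hx
        (show 0 < (u x - a) / 2 by linarith)
      filter_upwards [eventually_ge_atTop n₀] with n hn
      refine lt_min (ha.trans_le (abs_le.1 (hT x hx)).2) ?_
      have := sInf_curveCosts_mono hG hKne (hGc n₀) (hG0 n₀) (hGc n) (fun y ↦ hmono y hn) hlow x
      linarith
    have h2 := ENNReal.tendsto_ofReal (this.sub_const (u x)).abs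
    simpa using h2
  have htend : Tendsto (fun n ↦ ∫⁻ x in K, ENNReal.ofReal |w n x - u x| ∂μ) atTop (𝓝 0) := by
    have huK : AEMeasurable u (μ.restrict K) := (huc.mono hKW).aemeasurable hKm
    have := tendsto_lintegral_of_dominated_convergence' (μ := μ.restrict K)
      (F := fun n x ↦ ENNReal.ofReal |w n x - u x|) (f := fun _ ↦ 0)
      (fun _ ↦ ENNReal.ofReal (2 * T))
      (fun n ↦ ((hpair n).continuous_fun.measurable.aemeasurable.sub huK).abs.ennreal_ofReal)
      (fun n ↦ ?_) ?_ ?_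
    · simpa using this
    · refine (ae_restrict_iff' hKm).2 (ae_of_all _ fun x hx ↦ ENNReal.ofReal_le_ofReal ?_)
      have := hwK n x hx
      have := abs_le.1 (hT x hx)
      rw [abs_le]
      constructor <;> linarith
    · rw [setLIntegral_const]
      exact ENNReal.mul_ne_top ENNReal.ofReal_ne_top hK.measure_lt_top.ne
    · exact (ae_restrict_iff' hKm).2 (ae_of_all _ fun x hx ↦ hlim x hx)
  obtain ⟨n, hn⟩ := (htend.eventually (gt_mem_nhds (pos_iff_ne_zero.2 hε))).exists
  exact ⟨w n, G n, hpair n, hvint n, hn.le⟩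

theorem exists_gradPair_of_totVarOn [ProperSpace X] (hG : IsGeodesic X) {μ : Measure X}
    [IsLocallyFiniteMeasure μ] {W K : Set X} (hW : IsOpen W) (hK : IsCompact K) (hKW : K ⊆ W)
    {f : X → ℝ} (hfin : totVarOn μ f W ≠ ⊤) {ε : ℝ≥0∞} (hε : ε ≠ 0) :
    ∃ w v : X → ℝ, GradPair w v ∧
      ∫⁻ x in K, ENNReal.ofReal (v x) ∂μ ≤ totVarOn μ f W + ε ∧
      ∫⁻ x in K, ENNReal.ofReal |w x - f x| ∂μ ≤ ε := by
  have hε2 : ε / 2 ≠ 0 := by simpa using hε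
  have hlt : totVarOn μ f W < totVarOn μ f W + ε / 2 := ENNReal.lt_add_right hfin hε2
  obtain ⟨us, h1⟩ := iInf_lt_iff.1 hlt
  obtain ⟨hus, h2⟩ := iInf_lt_iff.1 h1
  obtain ⟨hconv, h3⟩ := iInf_lt_iff.1 h2
  have hfreq := frequently_lt_of_liminf_lt (by isBoundedDefault) h3
  have hev := (hconv K hK.isClosed hK.isBounded hKW).eventually (gt_mem_nhds (pos_iff_ne_zero.2 hε2))
  obtain ⟨i, hi1, hi2⟩ := (hfreq.and_eventually hev).exists
  obtain ⟨w, v, hwv, hv, hwu⟩ := exists_gradPair_of_locallyLipschitz (μ := μ) hG hW hK hKW (hus i) hε2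
  have hKm := hK.isClosed.measurableSet
  obtain ⟨L, hL⟩ := hus i K hK.isClosed hK.isBounded hKW
  have hmeas : AEMeasurable (fun x ↦ ENNReal.ofReal |w x - us i x|) (μ.restrict K) :=
    (hwv.continuous_fun.measurable.aemeasurable.sub
      (hL.continuousOn.aemeasurable hKm)).abs.ennreal_ofReal
  refine ⟨w, v, hwv, hv.trans ?_, ?_⟩
  · calc _ ≤ totVarOn μ f W + ε / 2 + ε / 2 := by gcongr
      _ = _ := by rw [add_assoc, ENNReal.add_halves]
  · calc ∫⁻ x in K, ENNReal.ofReal |w x - f x| ∂μ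
        ≤ ∫⁻ x in K, ENNReal.ofReal |w x - us i x| + ENNReal.ofReal |us i x - f x| ∂μ := by
          refine lintegral_mono fun x ↦ ?_
          rw [← ENNReal.ofReal_add (abs_nonneg _) (abs_nonneg _)]
          exact ENNReal.ofReal_le_ofReal (abs_sub_le _ _ _)
      _ = _ := lintegral_add_left' hmeas _
      _ ≤ ε / 2 + ε / 2 := add_le_add hwu hi2.le
      _ = ε := ENNReal.add_halves ε

end KeyLemma

section Tent

variable {X : Type u} [MetricSpace X]

/-- The tent function of radius one around `x`. -/
def tent (x y : X) : ℝ := max 0 (1 - dist x y)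

theorem tent_nonneg (x y : X) : 0 ≤ tent x y := le_max_left _ _

theorem tent_le_one (x y : X) : tent x y ≤ 1 :=
  max_le zero_le_one (by linarith [dist_nonneg (x := x) (y := y)])

theorem tent_eq_zero {x y : X} (h : 1 ≤ dist x y) : tent x y = 0 :=
  max_eq_left (by linarith)

theorem continuous_tent (x : X) : Continuous (tent x) := by
  unfold tent
  fun_prop

theorem abs_tent_sub_le (x x' y : X) : |tent x' y - tent x y| ≤ dist x x' := by
  unfold tent
  rw [max_comm, max_comm 0]
  refine (abs_max_sub_max_le_abs _ _ _).trans ?_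
  rw [show 1 - dist x' y - (1 - dist x y) = dist x y - dist x' y by ring]
  exact abs_dist_sub_le _ _ _

theorem abs_tent_sub_le_indicator {x x' : X} (hd : dist x x' ≤ 1 / 2) (y : X) :
    |tent x' y - tent x y| ≤ (ball x (3 / 2)).indicator (fun _ ↦ dist x x') y := by
  by_cases hy : y ∈ ball x (3 / 2)
  · rw [indicator_of_mem hy]
    exact abs_tent_sub_le x x' y
  · rw [indicator_of_notMem hy]
    rw [mem_ball, not_lt, dist_comm] at hy
    have := dist_triangle x x' y
    rw [tent_eq_zero (by linarith), tent_eq_zero (by linarith)]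
    simp

end Tent

section Averaging

variable {X : Type u} [MetricSpace X] [MeasurableSpace X] {μ : Measure X} {Cd : ℝ≥0}

theorem IsDoublingWith.measureReal_ball_le_of_dist (h : IsDoublingWith μ Cd) (hCd : 1 ≤ Cd)
    {x y : X} {r s : ℝ} (hr : 0 < r) (n : ℕ) (hs : s + dist x y ≤ 2 ^ n * r) :
    μ.real (ball x s) ≤ (Cd : ℝ) ^ n * μ.real (ball y r) := by
  have h1 := h.measure_ball_le_of_dist hr n hs
  have := ENNReal.toReal_mono (ENNReal.mul_ne_top (by finiteness)
    (h.measure_ball_lt_top hCd y r).ne) h1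
  simpa [Measure.real] using this

theorem IsDoublingWith.measureReal_ball_pos (h : IsDoublingWith μ Cd) (hCd : 1 ≤ Cd) (x : X)
    {r : ℝ} (hr : 0 < r) : 0 < μ.real (ball x r) :=
  ENNReal.toReal_pos (h.measure_ball_pos x hr).ne' (h.measure_ball_lt_top hCd x r).ne

/-- The averaging kernel obtained by normalizing the tent functions. -/
def avgKernel (μ : Measure X) (x y : X) : ℝ := tent x y / ∫ z, tent x z ∂μ

/-- The average of `f` against the kernel `avgKernel`. -/
def avg (μ : Measure X) (f : X → ℝ) (x : X) : ℝ := ∫ y, avgKernel μ x y * f y ∂μ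

theorem avgKernel_nonneg (x y : X) : 0 ≤ avgKernel μ x y :=
  div_nonneg (tent_nonneg _ _) (integral_nonneg fun z ↦ tent_nonneg x z)

theorem avgKernel_eq_zero {x y : X} (h : 1 ≤ dist x y) : avgKernel μ x y = 0 := by
  simp [avgKernel, tent_eq_zero h]

variable [BorelSpace X]

theorem integrable_indicator_ball (h : IsDoublingWith μ Cd) (hCd : 1 ≤ Cd) (x : X) (r c : ℝ) :
    Integrable ((ball x r).indicator fun _ ↦ c) μ :=
  (integrable_indicator_iff measurableSet_ball).2
    (integrableOn_const (h.measure_ball_lt_top hCd x r).ne)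

theorem integrable_tent (h : IsDoublingWith μ Cd) (hCd : 1 ≤ Cd) (x : X) :
    Integrable (tent x) μ := by
  refine (integrable_indicator_ball h hCd x 1 1).mono'
    (continuous_tent x).measurable.aestronglyMeasurable (ae_of_all _ fun y ↦ ?_)
  rw [Real.norm_of_nonneg (tent_nonneg x y)]
  by_cases hy : y ∈ ball x 1
  · rw [indicator_of_mem hy]; exact tent_le_one x y
  · rw [indicator_of_notMem hy]
    rw [mem_ball, not_lt, dist_comm] at hy
    exact (tent_eq_zero hy).le

theorem le_integral_tent (h : IsDoublingWith μ Cd) (hCd : 1 ≤ Cd) (x : X) :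
    1 / 2 * μ.real (ball x (1 / 2)) ≤ ∫ y, tent x y ∂μ := by
  have e : ∫ y, (ball x (1 / 2)).indicator (fun _ ↦ (1 / 2 : ℝ)) y ∂μ =
      1 / 2 * μ.real (ball x (1 / 2)) := by
    rw [integral_indicator measurableSet_ball, setIntegral_const, smul_eq_mul, mul_comm]
  rw [← e]
  refine integral_mono (integrable_indicator_ball h hCd _ _ _) (integrable_tent h hCd x) fun y ↦ ?_
  by_cases hy : y ∈ ball x (1 / 2)
  · rw [indicator_of_mem hy]
    rw [mem_ball, dist_comm] at hy
    exact le_max_of_le_right (by linarith)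
  · rw [indicator_of_notMem hy]; exact tent_nonneg x y

theorem integral_tent_pos (h : IsDoublingWith μ Cd) (hCd : 1 ≤ Cd) (x : X) :
    0 < ∫ y, tent x y ∂μ :=
  lt_of_lt_of_le (by have := h.measureReal_ball_pos hCd x (r := 1 / 2) (by norm_num); positivity)
    (le_integral_tent h hCd x)

theorem abs_integral_tent_sub_le (h : IsDoublingWith μ Cd) (hCd : 1 ≤ Cd) {x x' : X}
    (hd : dist x x' ≤ 1 / 2) :
    |∫ y, tent x y ∂μ - ∫ y, tent x' y ∂μ| ≤ dist x x' * μ.real (ball x (3 / 2)) := by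
  rw [abs_sub_comm, ← integral_sub (integrable_tent h hCd x') (integrable_tent h hCd x)]
  rw [← Real.norm_eq_abs]
  refine (norm_integral_le_of_norm_le (integrable_indicator_ball h hCd x (3 / 2) (dist x x'))
    (ae_of_all _ fun y ↦
      (Real.norm_eq_abs _).trans_le (abs_tent_sub_le_indicator hd y))).trans_eq ?_
  rw [integral_indicator measurableSet_ball, setIntegral_const, smul_eq_mul, mul_comm]

theorem integrable_avgKernel (h : IsDoublingWith μ Cd) (hCd : 1 ≤ Cd) (x : X) :
    Integrable (avgKernel μ x) μ := (integrable_tent h hCd x).div_const _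

theorem integral_avgKernel (h : IsDoublingWith μ Cd) (hCd : 1 ≤ Cd) (x : X) :
    ∫ y, avgKernel μ x y ∂μ = 1 := by
  unfold avgKernel
  rw [integral_div, div_self (integral_tent_pos h hCd x).ne']

theorem avgKernel_le (h : IsDoublingWith μ Cd) (hCd : 1 ≤ Cd) (x y : X) :
    avgKernel μ x y ≤ 2 * Cd / μ.real (ball x 1) := by
  have h1 := le_integral_tent h hCd x
  have h2 := h.measureReal_ball_le_of_dist hCd (x := x) (y := x) (r := 1 / 2) (s := 1)
    (by norm_num) 1 (by norm_num)
  have h3 := h.measureReal_ball_pos hCd x zero_lt_one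
  have h4 := integral_tent_pos h hCd x
  unfold avgKernel
  rw [div_le_div_iff₀ h4 h3]
  have h5 : tent x y * μ.real (ball x 1) ≤ 1 * μ.real (ball x 1) := by
    gcongr; exact tent_le_one x y
  have h6 : (2 * Cd : ℝ) * (1 / 2 * μ.real (ball x (1 / 2))) ≤ 2 * Cd * ∫ z, tent x z ∂μ := by gcongr
  rw [pow_one] at h2
  linarith

theorem abs_avgKernel_sub_le (h : IsDoublingWith μ Cd) (hCd : 1 ≤ Cd) {x x' : X}
    (hd : dist x x' ≤ 1 / 2) (y : X) :
    |avgKernel μ x' y - avgKernel μ x y| ≤ (ball x (3 / 2)).indicator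
      (fun _ ↦ (2 * Cd ^ 2 + (2 * Cd ^ 2) ^ 2) * dist x x' / μ.real (ball x (3 / 2))) y := by
  by_cases hy : y ∈ ball x (3 / 2)
  swap
  · rw [indicator_of_notMem hy]
    rw [mem_ball, not_lt, dist_comm] at hy
    have := dist_triangle x x' y
    rw [avgKernel_eq_zero (by linarith), avgKernel_eq_zero (by linarith)]
    simp
  rw [indicator_of_mem hy]
  have hC1 : (1 : ℝ) ≤ Cd := by exact_mod_cast hCd
  set m := μ.real (ball x (3 / 2)) with hm
  set C : ℝ := 2 * Cd ^ 2 with hC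
  have hm0 : 0 < m := h.measureReal_ball_pos hCd x (by norm_num)
  have hC0 : 0 < C := by positivity
  have hk0 := integral_tent_pos h hCd x
  have hk0' := integral_tent_pos h hCd x'
  have hk : m / C ≤ ∫ z, tent x z ∂μ := by
    have h1 := le_integral_tent h hCd x
    have h2 := h.measureReal_ball_le_of_dist hCd (x := x) (y := x) (r := 1 / 2) (s := 3 / 2)
      (by norm_num) 2 (by norm_num)
    rw [div_le_iff₀ hC0, hC]
    have : (1 / 2 * μ.real (ball x (1 / 2))) * (2 * (Cd : ℝ) ^ 2) ≤
      (∫ z, tent x z ∂μ) * (2 * (Cd : ℝ) ^ 2) := by gcongr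
    linarith
  have hk' : m / C ≤ ∫ z, tent x' z ∂μ := by
    have h1 := le_integral_tent h hCd x'
    have h2 := h.measureReal_ball_le_of_dist hCd (x := x) (y := x') (r := 1 / 2) (s := 3 / 2)
      (by norm_num) 2 (by linarith)
    rw [div_le_iff₀ hC0, hC]
    have : (1 / 2 * μ.real (ball x' (1 / 2))) * (2 * (Cd : ℝ) ^ 2) ≤
      (∫ z, tent x' z ∂μ) * (2 * (Cd : ℝ) ^ 2) := by gcongr
    linarith
  have hkk := abs_integral_tent_sub_le h hCd hd
  unfold avgKernel
  set k := ∫ z, tent x z ∂μ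
  set k' := ∫ z, tent x' z ∂μ
  have hmC : 0 < m / C := by positivity
  have e : tent x' y / k' - tent x y / k =
      (tent x' y - tent x y) / k' + tent x y * (k - k') / (k * k') := by
    field_simp
    ring
  rw [e]
  calc _ ≤ |tent x' y - tent x y| / k' + tent x y * |k - k'| / (k * k') := by
        refine (abs_add_le _ _).trans_eq ?_
        rw [abs_div, abs_div, abs_mul, abs_of_pos hk0', abs_of_pos (mul_pos hk0 hk0'),
          abs_of_nonneg (tent_nonneg x y)]
    _ ≤ dist x x' / (m / C) + 1 * (dist x x' * m) / ((m / C) * (m / C)) := by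
        gcongr
        · exact abs_tent_sub_le x x' y
        · exact tent_le_one x y
    _ = _ := by
        field_simp

theorem integrable_avgKernel_mul (h : IsDoublingWith μ Cd) (hCd : 1 ≤ Cd) {b : X → ℝ}
    (hb : Measurable b) {M : ℝ} (hM : ∀ x, |b x| ≤ M) (x : X) :
    Integrable (fun y ↦ avgKernel μ x y * b y) μ :=
  (integrable_avgKernel h hCd x).mul_bdd hb.aestronglyMeasurable (ae_of_all _ hM)

theorem abs_avg_le (h : IsDoublingWith μ Cd) (hCd : 1 ≤ Cd) {b : X → ℝ}
    {M : ℝ} (hM : ∀ x, |b x| ≤ M) (x : X) : |avg μ b x| ≤ M := by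
  rw [← Real.norm_eq_abs]
  refine (norm_integral_le_of_norm_le ((integrable_avgKernel h hCd x).mul_const M)
    (ae_of_all _ fun y ↦ ?_)).trans_eq ?_
  · rw [Real.norm_eq_abs, abs_mul, abs_of_nonneg (avgKernel_nonneg x y)]
    gcongr
    · exact avgKernel_nonneg x y
    · exact hM y
  · rw [integral_mul_const, integral_avgKernel h hCd, one_mul]

theorem abs_avg_sub_le (h : IsDoublingWith μ Cd) (hCd : 1 ≤ Cd) {b : X → ℝ}
    (hb : Measurable b) {M : ℝ} (hM : ∀ x, |b x| ≤ M) {x x' : X} (hd : dist x x' ≤ 1 / 2) (c : ℝ) :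
    |avg μ b x' - avg μ b x| ≤ (2 * Cd ^ 2 + (2 * Cd ^ 2) ^ 2) * dist x x' /
      μ.real (ball x (3 / 2)) * ∫ y in ball x (3 / 2), |b y - c| ∂μ := by
  have hbc : ∀ y, |b y - c| ≤ M + |c| := fun y ↦ (abs_sub _ _).trans (by gcongr; exact hM y)
  have hsub : ∀ z, avg μ (fun y ↦ b y - c) z = avg μ b z - c := by
    intro z
    unfold avg
    simp only [mul_sub]
    rw [integral_sub (integrable_avgKernel_mul h hCd hb hM z)
      ((integrable_avgKernel h hCd z).mul_const c), integral_mul_const, integral_avgKernel h hCd,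
      one_mul]
  have e : avg μ b x' - avg μ b x = avg μ (fun y ↦ b y - c) x' - avg μ (fun y ↦ b y - c) x := by
    rw [hsub, hsub]; ring
  set κ := (2 * (Cd : ℝ) ^ 2 + (2 * Cd ^ 2) ^ 2) * dist x x' / μ.real (ball x (3 / 2)) with hκ
  rw [e, avg, avg, ← integral_sub (integrable_avgKernel_mul h hCd (hb.sub_const c) hbc x')
    (integrable_avgKernel_mul h hCd (hb.sub_const c) hbc x)]
  have hint : IntegrableOn (fun y ↦ κ * |b y - c|) (ball x (3 / 2)) μ := by
    refine Integrable.const_mul ?_ _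
    refine Integrable.mono' (g := fun _ ↦ M + |c|)
      (integrableOn_const (h.measure_ball_lt_top hCd x _).ne)
      (hb.sub_const c).abs.aestronglyMeasurable (ae_of_all _ fun y ↦ ?_)
    rw [Real.norm_eq_abs, abs_abs]
    exact hbc y
  rw [← Real.norm_eq_abs]
  refine (norm_integral_le_of_norm_le ((integrable_indicator_iff measurableSet_ball).2 hint)
    (ae_of_all _ fun y ↦ ?_)).trans_eq ?_
  · rw [← sub_mul, Real.norm_eq_abs, abs_mul]
    refine (mul_le_mul_of_nonneg_right (abs_avgKernel_sub_le h hCd hd y) (abs_nonneg _)).trans_eq ?_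
    by_cases hy : y ∈ ball x (3 / 2) <;> simp [hy, hκ]
  · rw [integral_indicator measurableSet_ball, integral_const_mul]

theorem exists_lipschitzWith_avg (h : IsDoublingWith μ Cd) (hCd : 1 ≤ Cd) {b : X → ℝ}
    (hb : Measurable b) {M : ℝ} (hM : ∀ x, |b x| ≤ M) :
    ∃ L : ℝ≥0, LipschitzWith L (avg μ b) := by
  set C : ℝ := 2 * (Cd : ℝ) ^ 2 + (2 * Cd ^ 2) ^ 2 with hC
  refine ⟨(max (C * M) (4 * M)).toNNReal, LipschitzWith.of_dist_le' fun x x' ↦ ?_⟩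
  have hM0 : 0 ≤ M := (abs_nonneg _).trans (hM x)
  rw [dist_comm, Real.dist_eq]
  rcases le_total (dist x x') (1 / 2) with hd | hd
  · have h1 := abs_avg_sub_le h hCd hb hM hd 0
    have hm0 : 0 < μ.real (ball x (3 / 2)) := h.measureReal_ball_pos hCd x (by norm_num)
    have h2 : ∫ y in ball x (3 / 2), |b y - 0| ∂μ ≤ M * μ.real (ball x (3 / 2)) := by
      refine (Real.le_norm_self _).trans (norm_setIntegral_le_of_norm_le_const
        (h.measure_ball_lt_top hCd x _) fun y _ ↦ ?_)
      simpa using hM y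
    calc _ ≤ C * dist x x' / μ.real (ball x (3 / 2)) * (M * μ.real (ball x (3 / 2))) := by
          refine h1.trans ?_
          gcongr
      _ = C * M * dist x x' := by field_simp
      _ ≤ _ := by gcongr; exact le_max_left _ _
  · calc |avg μ b x' - avg μ b x| ≤ |avg μ b x'| + |avg μ b x| := abs_sub _ _
      _ ≤ M + M := add_le_add (abs_avg_le h hCd hM x') (abs_avg_le h hCd hM x)
      _ ≤ 4 * M * dist x x' := by nlinarith
      _ ≤ _ := by gcongr; exact le_max_right _ _

end Averaging

section Oscillation

variable {X : Type u} [MetricSpace X] [MeasurableSpace X] {μ : Measure X} {Cd : ℝ≥0}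

theorem IsDoublingWith.isLocallyFiniteMeasure (h : IsDoublingWith μ Cd) (hCd : 1 ≤ Cd) :
    IsLocallyFiniteMeasure μ :=
  ⟨fun x ↦ ⟨ball x 1, ball_mem_nhds x one_pos, h.measure_ball_lt_top hCd x 1⟩⟩

theorem IsDoublingWith.inv_measure_ball_le (h : IsDoublingWith μ Cd) (hCd : 1 ≤ Cd) {x y : X}
    {r s : ℝ} (hr : 0 < r) (n : ℕ) (hs : s + dist x y ≤ 2 ^ n * r) :
    (μ (ball y r))⁻¹ ≤ (Cd : ℝ≥0∞) ^ n * (μ (ball x s))⁻¹ := by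
  have h1 := h.measure_ball_le_of_dist hr n hs
  have hC : (Cd : ℝ≥0∞) ^ n ≠ 0 := by
    have : Cd ≠ 0 := (zero_lt_one.trans_le hCd).ne'
    simp [this]
  have hC' : (Cd : ℝ≥0∞) ^ n ≠ ⊤ := by finiteness
  rw [← inv_inv ((Cd : ℝ≥0∞) ^ n), ← ENNReal.mul_inv (.inl (ENNReal.inv_ne_zero.2 hC'))
    (.inl (ENNReal.inv_ne_top.2 hC)),
    ENNReal.inv_le_inv, mul_comm, ← div_eq_mul_inv]
  apply ENNReal.div_le_of_le_mul'
  exact h1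

/-- The sum of the oscillations of `f` between pairs of points of a set. -/
def doubleOsc (μ : Measure X) (f : X → ℝ) (B : Set X) : ℝ≥0∞ :=
  ∫⁻ y in B, ∫⁻ w in B, ENNReal.ofReal |f y - f w| ∂μ ∂μ

/-- The mean oscillation of `f` at scale `4`. -/
def meanOsc (μ : Measure X) (f : X → ℝ) (x : X) : ℝ≥0∞ :=
  (μ (ball x 4))⁻¹ * ((μ (ball x 4))⁻¹ * doubleOsc μ f (ball x 4))

theorem meanOsc_le (h : IsDoublingWith μ Cd) (hCd : 1 ≤ Cd) {f : X → ℝ} {T : ℝ}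
    (hT : ∀ x, |f x| ≤ T) (x : X) : meanOsc μ f x ≤ ENNReal.ofReal (2 * T) := by
  have h0 := (h.measure_ball_pos x (show (0:ℝ) < 4 by norm_num)).ne'
  have ht := (h.measure_ball_lt_top hCd x 4).ne
  have h1 : doubleOsc μ f (ball x 4) ≤
      ∫⁻ y in ball x 4, ∫⁻ w in ball x 4, ENNReal.ofReal (2 * T) ∂μ ∂μ := by
    refine lintegral_mono fun y ↦ lintegral_mono fun w ↦ ENNReal.ofReal_le_ofReal ?_
    calc _ ≤ |f y| + |f w| := abs_sub _ _
      _ ≤ _ := by linarith [hT y, hT w]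
  rw [setLIntegral_const, setLIntegral_const] at h1
  calc _ ≤ (μ (ball x 4))⁻¹ * ((μ (ball x 4))⁻¹ *
        (ENNReal.ofReal (2 * T) * μ (ball x 4) * μ (ball x 4))) := by unfold meanOsc; gcongr
    _ = ((μ (ball x 4))⁻¹ * μ (ball x 4)) * ((μ (ball x 4))⁻¹ * μ (ball x 4)) *
        ENNReal.ofReal (2 * T) := by ring
    _ = _ := by rw [ENNReal.inv_mul_cancel h0 ht, one_mul, one_mul]

theorem meanOsc_ne_top (h : IsDoublingWith μ Cd) (hCd : 1 ≤ Cd) {f : X → ℝ} {T : ℝ}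
    (hT : ∀ x, |f x| ≤ T) (x : X) : meanOsc μ f x ≠ ⊤ :=
  ne_top_of_le_ne_top ENNReal.ofReal_ne_top (meanOsc_le h hCd hT x)

theorem abs_toReal_meanOsc_le (h : IsDoublingWith μ Cd) (hCd : 1 ≤ Cd) {f : X → ℝ} {T : ℝ}
    (hT : ∀ x, |f x| ≤ T) (x : X) : |(meanOsc μ f x).toReal| ≤ 2 * T := by
  rw [abs_of_nonneg ENNReal.toReal_nonneg]
  refine ENNReal.toReal_le_of_le_ofReal ?_ (meanOsc_le h hCd hT x)
  linarith [(abs_nonneg _).trans (hT x)]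

variable [BorelSpace X]

theorem measurable_measure_ball [SecondCountableTopology X] [SFinite μ] (r : ℝ) :
    Measurable fun x ↦ μ (ball x r) := by
  have hs : MeasurableSet {p : X × X | dist p.2 p.1 < r} :=
    measurableSet_lt (by fun_prop) measurable_const
  exact measurable_measure_prodMk_left hs

theorem measurable_lintegral_ball [SecondCountableTopology X] [SFinite μ] {F : X × X → ℝ≥0∞}
    (hF : Measurable F) (r : ℝ) : Measurable fun x ↦ ∫⁻ y in ball x r, F (x, y) ∂μ := by
  have hs : MeasurableSet {p : X × X | dist p.2 p.1 < r} :=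
    measurableSet_lt (by fun_prop) measurable_const
  have := (hF.indicator hs).lintegral_prod_right' (ν := μ)
  convert this using 1
  ext x
  rw [← lintegral_indicator measurableSet_ball]
  rfl

theorem lintegral_lintegral_ball_swap [SecondCountableTopology X] [SFinite μ] {F : X × X → ℝ≥0∞}
    (hF : Measurable F) (r : ℝ) :
    ∫⁻ x, ∫⁻ y in ball x r, F (x, y) ∂μ ∂μ = ∫⁻ y, ∫⁻ x in ball y r, F (x, y) ∂μ ∂μ := by
  have hs : MeasurableSet {p : X × X | dist p.2 p.1 < r} :=
    measurableSet_lt (by fun_prop) measurable_const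
  have := lintegral_lintegral_swap (μ := μ) (ν := μ)
    (f := fun x y ↦ ({p : X × X | dist p.2 p.1 < r}.indicator F) (x, y))
    (hF.indicator hs).aemeasurable
  refine Eq.trans ?_ (this.trans ?_)
  · refine lintegral_congr fun x ↦ ?_
    rw [← lintegral_indicator measurableSet_ball]
    rfl
  · refine lintegral_congr fun y ↦ ?_
    rw [← lintegral_indicator measurableSet_ball]
    refine lintegral_congr fun x ↦ ?_
    rw [indicator, indicator]
    congr 1
    exact propext (show dist y x < r ↔ dist x y < r by rw [dist_comm])

theorem lintegral_ballAverage_le [SecondCountableTopology X] [SFinite μ]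
    (h : IsDoublingWith μ Cd) (hCd : 1 ≤ Cd) {F : X → ℝ≥0∞} (hF : Measurable F) {r : ℝ}
    (hr : 0 < r) :
    ∫⁻ x, (μ (ball x r))⁻¹ * ∫⁻ y in ball x r, F y ∂μ ∂μ ≤ Cd * ∫⁻ y, F y ∂μ := by
  have hm : Measurable fun p : X × X ↦ (μ (ball p.1 r))⁻¹ * F p.2 :=
    ((measurable_measure_ball r).inv.comp measurable_fst).mul (hF.comp measurable_snd)
  have h1 := lintegral_lintegral_ball_swap (μ := μ) hm r
  simp only [lintegral_const_mul _ hF] at h1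
  rw [h1, ← lintegral_const_mul _ hF]
  refine lintegral_mono fun y ↦ ?_
  have h0 := (h.measure_ball_pos y hr).ne'
  have ht := (h.measure_ball_lt_top hCd y r).ne
  calc ∫⁻ x in ball y r, (μ (ball x r))⁻¹ * F y ∂μ
      ≤ ∫⁻ x in ball y r, Cd * (μ (ball y r))⁻¹ * F y ∂μ := by
        refine setLIntegral_mono' measurableSet_ball fun x hx ↦ ?_
        gcongr
        rw [mem_ball, dist_comm] at hx
        simpa using h.inv_measure_ball_le hCd hr 1 (x := y) (y := x) (s := r) (by linarith)
    _ = Cd * F y * ((μ (ball y r))⁻¹ * μ (ball y r)) := by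
        rw [setLIntegral_const]; ring
    _ = Cd * F y := by rw [ENNReal.inv_mul_cancel h0 ht, mul_one]

theorem le_lintegral_ballAverage [SecondCountableTopology X] [SFinite μ]
    (h : IsDoublingWith μ Cd) (hCd : 1 ≤ Cd) {F : X → ℝ≥0∞} (hF : Measurable F) {r : ℝ}
    (hr : 0 < r) :
    ∫⁻ y, F y ∂μ ≤ Cd * ∫⁻ x, (μ (ball x r))⁻¹ * ∫⁻ y in ball x r, F y ∂μ ∂μ := by
  have hm : Measurable fun p : X × X ↦ (μ (ball p.1 r))⁻¹ * F p.2 :=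
    ((measurable_measure_ball r).inv.comp measurable_fst).mul (hF.comp measurable_snd)
  have h1 := lintegral_lintegral_ball_swap (μ := μ) hm r
  simp only [lintegral_const_mul _ hF] at h1
  rw [h1, ← lintegral_const_mul' _ _ ENNReal.coe_ne_top]
  refine lintegral_mono fun y ↦ ?_
  have h0 := (h.measure_ball_pos y hr).ne'
  have ht := (h.measure_ball_lt_top hCd y r).ne
  calc F y = F y * ((μ (ball y r))⁻¹ * μ (ball y r)) := by
        rw [ENNReal.inv_mul_cancel h0 ht, mul_one]
    _ = ∫⁻ x in ball y r, (μ (ball y r))⁻¹ * F y ∂μ := by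
        rw [setLIntegral_const]; ring
    _ ≤ ∫⁻ x in ball y r, Cd * ((μ (ball x r))⁻¹ * F y) ∂μ := by
        refine setLIntegral_mono' measurableSet_ball fun x hx ↦ ?_
        rw [← mul_assoc]
        gcongr
        rw [mem_ball] at hx
        simpa using h.inv_measure_ball_le hCd hr 1 (x := x) (y := y) (s := r) (by linarith)
    _ = _ := lintegral_const_mul' _ _ ENNReal.coe_ne_top

theorem measurable_meanOsc [SecondCountableTopology X] [SFinite μ] {f : X → ℝ}
    (hf : Measurable f) : Measurable (meanOsc μ f) := by
  have hb := (measurable_measure_ball (μ := μ) 4).inv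
  refine hb.mul (hb.mul ?_)
  have hs : MeasurableSet {p : (X × X) × X | dist p.2 p.1.1 < 4} :=
    measurableSet_lt (by fun_prop) measurable_const
  have h1 : Measurable fun p : (X × X) × X ↦ ENNReal.ofReal |f p.1.2 - f p.2| :=
    ((hf.comp (measurable_snd.comp measurable_fst)).sub
      (hf.comp measurable_snd)).abs.ennreal_ofReal
  have h2 := (h1.indicator hs).lintegral_prod_right' (ν := μ)
  convert measurable_lintegral_ball (μ := μ) h2 4 using 1
  ext x
  unfold doubleOsc
  refine lintegral_congr fun y ↦ ?_
  rw [← lintegral_indicator measurableSet_ball]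
  rfl

theorem ofReal_abs_integral_avgKernel_le (h : IsDoublingWith μ Cd) (hCd : 1 ≤ Cd) (g : X → ℝ)
    (x : X) : ENNReal.ofReal |∫ y, avgKernel μ x y * g y ∂μ| ≤
      2 * Cd * ((μ (ball x 1))⁻¹ * ∫⁻ y in ball x 1, ENNReal.ofReal |g y| ∂μ) := by
  rw [← Real.enorm_eq_ofReal_abs]
  refine (enorm_integral_le_lintegral_enorm _).trans ?_
  have ht := (h.measure_ball_lt_top hCd x 1).ne
  have h0 := (h.measure_ball_pos x one_pos).ne'
  have hc : 2 * Cd * (μ (ball x 1))⁻¹ ≠ ⊤ :=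
    ENNReal.mul_ne_top (by finiteness) (ENNReal.inv_ne_top.2 h0)
  rw [← mul_assoc, ← lintegral_const_mul' _ _ hc, ← lintegral_indicator measurableSet_ball]
  refine lintegral_mono fun y ↦ ?_
  by_cases hy : y ∈ ball x 1
  · rw [indicator_of_mem hy, enorm_mul, Real.enorm_eq_ofReal_abs (g y)]
    gcongr
    rw [Real.enorm_of_nonneg (avgKernel_nonneg x y)]
    refine (ENNReal.ofReal_le_ofReal (avgKernel_le h hCd x y)).trans_eq ?_
    rw [ENNReal.ofReal_div_of_pos (h.measureReal_ball_pos hCd x one_pos), Measure.real,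
      ENNReal.ofReal_toReal ht, ENNReal.ofReal_mul zero_le_two, div_eq_mul_inv]
    simp
  · rw [indicator_of_notMem hy]
    rw [mem_ball, not_lt, dist_comm] at hy
    simp [avgKernel_eq_zero hy]

end Oscillation

section AverageGradient

variable {X : Type u} [MetricSpace X] [MeasurableSpace X] [BorelSpace X] {μ : Measure X} {Cd : ℝ≥0}

theorem abs_avg_sub_le_meanOsc (h : IsDoublingWith μ Cd) (hCd : 1 ≤ Cd) {f : X → ℝ}
    (hf : Measurable f) {T : ℝ} (hT : ∀ x, |f x| ≤ T) {x x' z : X} (hd : dist x x' ≤ 1 / 2)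
    (hz : dist x z < 1) :
    |avg μ f x' - avg μ f x| ≤
      (2 * Cd ^ 2 + (2 * Cd ^ 2) ^ 2) * Cd ^ 4 * dist x x' * (meanOsc μ f z).toReal := by
  set B := ball x (3 / 2) with hB
  have hB0 : μ B ≠ 0 := (h.measure_ball_pos x (by norm_num)).ne'
  have hBt : μ B ≠ ⊤ := (h.measure_ball_lt_top hCd x _).ne
  set κ := (2 * (Cd : ℝ) ^ 2 + (2 * Cd ^ 2) ^ 2) * dist x x' with hκ
  have hκ0 : 0 ≤ κ := by positivity
  set Δ := |avg μ f x' - avg μ f x| with hΔ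
  have hint : ∀ c, IntegrableOn (fun y ↦ |f y - c|) B μ := fun c ↦ by
    refine Integrable.mono' (g := fun _ ↦ T + |c|)
      (integrableOn_const hBt)
      (hf.sub_const c).abs.aestronglyMeasurable (ae_of_all _ fun y ↦ ?_)
    rw [Real.norm_eq_abs, abs_abs]
    exact (abs_sub _ _).trans (by gcongr; exact hT y)
  have h1 : ∀ c, ENNReal.ofReal Δ ≤
      ENNReal.ofReal κ * (μ B)⁻¹ * ∫⁻ y in B, ENNReal.ofReal |f y - c| ∂μ := fun c ↦ by
    have := ENNReal.ofReal_le_ofReal (abs_avg_sub_le h hCd hf hT hd c)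
    rwa [ENNReal.ofReal_mul (by positivity), ofReal_integral_eq_lintegral_ofReal (hint c)
      (ae_of_all _ fun y ↦ abs_nonneg _), ENNReal.ofReal_div_of_pos
      (h.measureReal_ball_pos hCd x (by norm_num)), Measure.real, ENNReal.ofReal_toReal hBt,
      div_eq_mul_inv] at this
  have h2 : ENNReal.ofReal Δ ≤ ENNReal.ofReal κ * ((μ B)⁻¹ * ((μ B)⁻¹ * doubleOsc μ f B)) := by
    have h3 : ∫⁻ w in B, ENNReal.ofReal Δ ∂μ ≤ ∫⁻ w in B, ENNReal.ofReal κ * (μ B)⁻¹ *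
        ∫⁻ y in B, ENNReal.ofReal |f w - f y| ∂μ ∂μ := lintegral_mono fun w ↦ by
      simpa only [abs_sub_comm] using h1 (f w)
    rw [setLIntegral_const, lintegral_const_mul' _ _
      (ENNReal.mul_ne_top ENNReal.ofReal_ne_top (ENNReal.inv_ne_top.2 hB0))] at h3
    calc ENNReal.ofReal Δ = ENNReal.ofReal Δ * μ B * (μ B)⁻¹ := by
          rw [mul_assoc, ENNReal.mul_inv_cancel hB0 hBt, mul_one]
      _ ≤ _ := mul_le_mul_left h3 _
      _ = _ := by unfold doubleOsc; ring
  have hsub : B ⊆ ball z 4 := ball_subset_ball' (by linarith)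
  have hinv : (μ B)⁻¹ ≤ (Cd : ℝ≥0∞) ^ 2 * (μ (ball z 4))⁻¹ :=
    h.inv_measure_ball_le hCd (by norm_num) 2 (by rw [dist_comm]; linarith)
  have hosc : doubleOsc μ f B ≤ doubleOsc μ f (ball z 4) := by
    unfold doubleOsc
    exact (lintegral_mono fun y ↦ lintegral_mono_set hsub).trans (lintegral_mono_set hsub)
  have h4 : ENNReal.ofReal Δ ≤ ENNReal.ofReal (κ * Cd ^ 4) * meanOsc μ f z := by
    calc _ ≤ ENNReal.ofReal κ * ((Cd : ℝ≥0∞) ^ 2 * (μ (ball z 4))⁻¹ *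
          ((Cd : ℝ≥0∞) ^ 2 * (μ (ball z 4))⁻¹ * doubleOsc μ f (ball z 4))) := by
          refine h2.trans ?_
          gcongr
      _ = _ := by
          unfold meanOsc
          rw [ENNReal.ofReal_mul hκ0, ENNReal.ofReal_pow (by positivity), ENNReal.ofReal_coe_nnreal]
          ring
  rw [← ENNReal.ofReal_toReal (meanOsc_ne_top h hCd hT z), ← ENNReal.ofReal_mul (by positivity),
    ENNReal.ofReal_le_ofReal_iff (by positivity)] at h4
  calc _ ≤ _ := h4
    _ = _ := by rw [hκ]; ring

variable [SecondCountableTopology X] [SFinite μ]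

theorem gradPair_avg (h : IsDoublingWith μ Cd) (hCd : 1 ≤ Cd) {f : X → ℝ} (hf : Measurable f)
    {T : ℝ} (hT : ∀ x, |f x| ≤ T) :
    GradPair (avg μ f) fun x ↦ (2 * Cd ^ 2 + (2 * Cd ^ 2) ^ 2) * Cd ^ 4 *
      avg μ (fun y ↦ (meanOsc μ f y).toReal) x := by
  have hD := abs_toReal_meanOsc_le h hCd hT
  have hDm : Measurable fun y ↦ (meanOsc μ f y).toReal := (measurable_meanOsc hf).ennreal_toReal
  set D := fun y ↦ (meanOsc μ f y).toReal with hDdef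
  set C : ℝ := (2 * Cd ^ 2 + (2 * Cd ^ 2) ^ 2) * Cd ^ 4 with hC
  have hC0 : 0 ≤ C := by positivity
  have hbdd := abs_avg_le h hCd hD
  refine ⟨exists_lipschitzWith_avg h hCd hf hT, ?_, ⟨T, abs_avg_le h hCd hT⟩,
    ⟨C * (2 * T), fun x ↦ ?_⟩, fun x ↦ ?_, fun x ε hε ↦ ?_⟩
  · obtain ⟨L, hL⟩ := exists_lipschitzWith_avg h hCd hDm hD
    refine ⟨C.toNNReal * L, LipschitzWith.of_dist_le_mul fun x y ↦ ?_⟩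
    rw [Real.dist_eq, ← mul_sub, abs_mul, abs_of_nonneg hC0, NNReal.coe_mul,
      Real.coe_toNNReal _ hC0]
    exact (mul_le_mul_of_nonneg_left (hL.dist_le_mul x y) hC0).trans_eq (mul_assoc _ _ _).symm
  · gcongr
    exact (le_abs_self _).trans (hbdd x)
  · exact mul_nonneg hC0 (integral_nonneg fun y ↦
      mul_nonneg (avgKernel_nonneg x y) ENNReal.toReal_nonneg)
  · filter_upwards [closedBall_mem_nhds x (show (0:ℝ) < 1 / 2 by norm_num)] with x' hx'
    rw [mem_closedBall, dist_comm] at hx'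
    have key : |avg μ f x' - avg μ f x| ≤ C * dist x x' * avg μ D x := by
      calc |avg μ f x' - avg μ f x|
          = ∫ z, avgKernel μ x z * |avg μ f x' - avg μ f x| ∂μ := by
            rw [integral_mul_const, integral_avgKernel h hCd, one_mul]
        _ ≤ ∫ z, C * dist x x' * (avgKernel μ x z * D z) ∂μ := by
            refine integral_mono ((integrable_avgKernel h hCd x).mul_const _)
              ((integrable_avgKernel_mul h hCd hDm hD x).const_mul _) fun z ↦ ?_
            rcases le_or_gt 1 (dist x z) with hz | hz
            · simp [avgKernel_eq_zero hz]
            · have := abs_avg_sub_le_meanOsc h hCd hf hT hx' hz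
              have h0 := avgKernel_nonneg (μ := μ) x z
              calc _ ≤ avgKernel μ x z * (C * dist x x' * D z) := by
                    gcongr
                _ = _ := by ring
        _ = _ := integral_const_mul _ _
    rw [dist_comm x' x]
    calc _ ≤ _ := key
      _ = C * avg μ D x * dist x x' := by ring
      _ ≤ _ := by gcongr; linarith

theorem lintegral_avg_meanOsc_le (h : IsDoublingWith μ Cd) (hCd : 1 ≤ Cd) {f : X → ℝ}
    (hf : Measurable f) :
    ∫⁻ x, ENNReal.ofReal (avg μ (fun y ↦ (meanOsc μ f y).toReal) x) ∂μ ≤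
      2 * Cd * (Cd * ∫⁻ x, meanOsc μ f x ∂μ) := by
  calc _ ≤ ∫⁻ x, 2 * Cd * ((μ (ball x 1))⁻¹ * ∫⁻ y in ball x 1, meanOsc μ f y ∂μ) ∂μ := by
        refine lintegral_mono fun x ↦ ?_
        refine (ENNReal.ofReal_le_ofReal (le_abs_self _)).trans
          ((ofReal_abs_integral_avgKernel_le h hCd _ x).trans ?_)
        gcongr with y
        rw [abs_of_nonneg ENNReal.toReal_nonneg]
        exact ENNReal.ofReal_toReal_le
    _ ≤ _ := by
        rw [lintegral_const_mul' _ _ (by finiteness)]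
        gcongr
        exact lintegral_ballAverage_le h hCd (measurable_meanOsc hf) one_pos

theorem lintegral_abs_sub_avg_le (h : IsDoublingWith μ Cd) (hCd : 1 ≤ Cd) {f : X → ℝ}
    (hf : Measurable f) {T : ℝ} (hT : ∀ x, |f x| ≤ T) :
    ∫⁻ x, ENNReal.ofReal |avg μ f x - f x| ∂μ ≤
      Cd * (2 * Cd ^ 6 * ∫⁻ x, meanOsc μ f x ∂μ) := by
  have hpt : ∀ x, ENNReal.ofReal |avg μ f x - f x| ≤
      2 * Cd * ((μ (ball x 1))⁻¹ * ∫⁻ y in ball x 1, ENNReal.ofReal |f y - f x| ∂μ) := by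
    intro x
    have e : avg μ f x - f x = ∫ y, avgKernel μ x y * (f y - f x) ∂μ := by
      simp only [mul_sub]
      rw [integral_sub (integrable_avgKernel_mul h hCd hf hT x)
        ((integrable_avgKernel h hCd x).mul_const _), integral_mul_const,
        integral_avgKernel h hCd, one_mul, avg]
    rw [e]
    exact ofReal_abs_integral_avgKernel_le h hCd _ x
  have hm : Measurable fun x ↦ ENNReal.ofReal |avg μ f x - f x| := by
    obtain ⟨L, hL⟩ := exists_lipschitzWith_avg h hCd hf hT
    exact (hL.continuous.measurable.sub hf).abs.ennreal_ofReal
  refine (le_lintegral_ballAverage h hCd hm one_pos).trans ?_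
  gcongr
  rw [← lintegral_const_mul' _ _ (by finiteness)]
  refine lintegral_mono fun z ↦ ?_
  have h0 := (h.measure_ball_pos z (show (0:ℝ) < 4 by norm_num)).ne'
  have hin : ∀ x ∈ ball z 1, ENNReal.ofReal |avg μ f x - f x| ≤
      2 * Cd * (Cd ^ 3 * (μ (ball z 4))⁻¹) * ∫⁻ y in ball z 4, ENNReal.ofReal |f x - f y| ∂μ := by
    intro x hx
    rw [mem_ball] at hx
    refine (hpt x).trans ?_
    rw [mul_assoc (2 * (Cd : ℝ≥0∞))]
    gcongr 2 * Cd * (?_ * ?_)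
    · exact h.inv_measure_ball_le hCd one_pos 3 (by rw [dist_comm]; linarith)
    · simp only [abs_sub_comm (f x)]
      exact lintegral_mono_set (ball_subset_ball' (by linarith))
  calc (μ (ball z 1))⁻¹ * ∫⁻ x in ball z 1, ENNReal.ofReal |avg μ f x - f x| ∂μ
      ≤ (Cd ^ 2 * (μ (ball z 4))⁻¹) * (2 * Cd * (Cd ^ 3 * (μ (ball z 4))⁻¹) *
        doubleOsc μ f (ball z 4)) := by
        gcongr ?_ * ?_
        · exact h.inv_measure_ball_le hCd one_pos 2 (by simp; norm_num)
        · refine (setLIntegral_mono' measurableSet_ball hin).trans ?_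
          rw [lintegral_const_mul']
          · gcongr
            exact lintegral_mono_set (ball_subset_ball (by norm_num))
          · exact ENNReal.mul_ne_top (by finiteness)
              (ENNReal.mul_ne_top (by finiteness) (ENNReal.inv_ne_top.2 h0))
    _ = _ := by unfold meanOsc; ring

end AverageGradient

section Poincare

theorem doubleOsc_le_add {X : Type u} [MeasurableSpace X] {μ : Measure X}
    {f u : X → ℝ} (hf : Measurable f) (hu : Measurable u) {B : Set X}
    (hB : μ B ≠ ⊤) :
    doubleOsc μ f B ≤ doubleOsc μ u B + 2 * μ B * ∫⁻ y in B, ENNReal.ofReal |u y - f y| ∂μ := by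
  have hm : Measurable fun y ↦ ENNReal.ofReal |u y - f y| := (hu.sub hf).abs.ennreal_ofReal
  calc doubleOsc μ f B
      ≤ ∫⁻ y in B, ∫⁻ w in B, ENNReal.ofReal |u y - f y| + (ENNReal.ofReal |u w - f w| +
        ENNReal.ofReal |u y - u w|) ∂μ ∂μ := by
        refine lintegral_mono fun y ↦ lintegral_mono fun w ↦ ?_
        rw [← ENNReal.ofReal_add (abs_nonneg _) (abs_nonneg _),
          ← ENNReal.ofReal_add (abs_nonneg _) (by positivity)]
        refine ENNReal.ofReal_le_ofReal ?_
        rw [show f y - f w = -(u y - f y) + ((u w - f w) + (u y - u w)) by ring]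
        refine (abs_add_le _ _).trans ?_
        rw [abs_neg]
        gcongr
        exact abs_add_le _ _
    _ = _ := by
        simp only [lintegral_add_left measurable_const, lintegral_add_left hm, setLIntegral_const]
        rw [lintegral_add_left (hm.mul_const _), lintegral_add_left measurable_const,
          lintegral_mul_const' _ _ hB, setLIntegral_const]
        unfold doubleOsc
        ring

variable {X : Type u} [MetricSpace X]

theorem lipConst_le_of_lipschitzOnWith {u : X → ℝ} {K : ℝ≥0} {s : Set X}
    (hu : LipschitzOnWith K u s) {x : X} (hs : s ∈ 𝓝 x) : lipConst u x ≤ K := by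
  rw [← ENNReal.ofReal_coe_nnreal]
  refine PtLipLE.lipConst_le (fun ε hε ↦ ?_) K.coe_nonneg
  filter_upwards [hs] with y hy
  calc |u y - u x| ≤ K * dist y x := hu.dist_le_mul y hy x (mem_of_mem_nhds hs)
    _ ≤ _ := by gcongr; linarith

theorem LocallyLipschitzOnSet.exists_lipschitzOnWith_closedBall {u : X → ℝ}
    (hu : LocallyLipschitzOnSet u univ) (x : X) (r : ℝ) :
    ∃ K : ℝ≥0, LipschitzOnWith K u (closedBall x r) ∧ ∀ y ∈ closedBall x r, lipConst u y ≤ K := by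
  obtain ⟨K, hK⟩ := hu (closedBall x (r + 1)) isClosed_closedBall isBounded_closedBall
    (subset_univ _)
  refine ⟨K, hK.mono (closedBall_subset_closedBall (by linarith)), fun y hy ↦
    lipConst_le_of_lipschitzOnWith hK (mem_of_superset (ball_mem_nhds y one_pos) ?_)⟩
  rw [mem_closedBall] at hy
  exact ball_subset_closedBall.trans (closedBall_subset_closedBall' (by linarith))

theorem LocallyLipschitzOnSet.continuous {u : X → ℝ} (hu : LocallyLipschitzOnSet u univ) :
    Continuous u := by
  refine continuous_iff_continuousAt.2 fun x ↦ ?_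
  obtain ⟨K, hK, -⟩ := hu.exists_lipschitzOnWith_closedBall x 1
  exact hK.continuousOn.continuousAt (closedBall_mem_nhds x one_pos)

variable [MeasurableSpace X] [BorelSpace X]

theorem LocallyLipschitzOnSet.measurable_lipConst {u : X → ℝ}
    (hu : LocallyLipschitzOnSet u univ) : Measurable (lipConst u) := by
  obtain ⟨m, hm, hmu⟩ := exists_measurable_eq_lipConst isOpen_univ hu.continuous.continuousOn
  rwa [show lipConst u = m from funext fun x ↦ (hmu x (mem_univ x)).symm]

theorem LocallyLipschitzOnSet.isUpperGradientOf_lipConst {u : X → ℝ}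
    (hu : LocallyLipschitzOnSet u univ) :
    IsUpperGradientOf (fun x ↦ (lipConst u x).toReal) u := by
  intro L hL γ hγ
  obtain ⟨K, hK, hKl⟩ := hu.exists_lipschitzOnWith_closedBall (γ 0) L
  have himg : γ '' Icc 0 L ⊆ closedBall (γ 0) L := by
    rintro _ ⟨t, ht, rfl⟩
    have := hγ.dist_le_mul t ht 0 ⟨le_rfl, hL⟩
    rw [NNReal.coe_one, one_mul, Real.dist_eq, sub_zero, abs_of_nonneg ht.1] at this
    exact this.trans ht.2
  have hle : ∀ t ∈ Ioc 0 L, lipConst u (γ t) ≤ K := fun t ht ↦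
    hKl _ (himg (mem_image_of_mem γ (Ioc_subset_Icc_self ht)))
  have h1 := abs_sub_le_lintegral_lipConst hL hγ (hK.mono himg)
  have hγm : AEMeasurable γ (volume.restrict (Ioc 0 L)) :=
    (hγ.continuousOn.mono Ioc_subset_Icc_self).aemeasurable measurableSet_Ioc
  have hint : IntegrableOn (fun t ↦ (lipConst u (γ t)).toReal) (Ioc 0 L) := by
    refine Integrable.mono' (g := fun _ ↦ (K : ℝ)) (integrableOn_const measure_Ioc_lt_top.ne)
      (hu.measurable_lipConst.ennreal_toReal.comp_aemeasurable hγm).aestronglyMeasurable ?_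
    rw [ae_restrict_iff' measurableSet_Ioc]
    refine ae_of_all _ fun t ht ↦ ?_
    rw [Real.norm_of_nonneg ENNReal.toReal_nonneg]
    exact ENNReal.toReal_mono ENNReal.coe_ne_top (hle t ht)
  rw [intervalIntegral.integral_of_le hL,
    ← ENNReal.ofReal_le_ofReal_iff (integral_nonneg fun t ↦ ENNReal.toReal_nonneg),
    ofReal_integral_eq_lintegral_ofReal hint (ae_of_all _ fun t ↦ ENNReal.toReal_nonneg)]
  refine h1.trans_eq (setLIntegral_congr_fun measurableSet_Ioc fun t ht ↦ ?_)
  exact (ENNReal.ofReal_toReal (ne_top_of_le_ne_top ENNReal.coe_ne_top (hle t ht))).symm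

variable {μ : Measure X} {Cd : ℝ≥0} {CP : ℝ}

theorem SupportsPoincare.doubleOsc_le (hP : SupportsPoincare μ CP) (hCP : 0 < CP)
    (h : IsDoublingWith μ Cd) (hCd : 1 ≤ Cd) {u : X → ℝ} (hu : LocallyLipschitzOnSet u univ)
    (x : X) {r : ℝ} (hr : 0 < r) :
    doubleOsc μ u (ball x r) ≤
      2 * μ (ball x r) * (ENNReal.ofReal (CP * r) * ∫⁻ y in ball x r, lipConst u y ∂μ) := by
  have hp := hP u hu _ (fun x ↦ ENNReal.toReal_nonneg) hu.measurable_lipConst.ennreal_toReal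
    hu.isUpperGradientOf_lipConst x r hr
  set c := ⨍ z in ball x r, u z ∂μ
  obtain ⟨K, hK, hKl⟩ := hu.exists_lipschitzOnWith_closedBall x r
  have hBt : μ (ball x r) ≠ ⊤ := (h.measure_ball_lt_top hCd x r).ne
  have hm0 := h.measureReal_ball_pos hCd x hr
  have hlt : ∀ y ∈ ball x r, lipConst u y ≤ K := fun y hy ↦ hKl y (ball_subset_closedBall hy)
  have hint : IntegrableOn (fun t ↦ (lipConst u t).toReal) (ball x r) μ := by
    refine Integrable.mono' (g := fun _ ↦ (K : ℝ)) (integrableOn_const hBt)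
      hu.measurable_lipConst.ennreal_toReal.aestronglyMeasurable ?_
    rw [ae_restrict_iff' measurableSet_ball]
    refine ae_of_all _ fun t ht ↦ ?_
    rw [Real.norm_of_nonneg ENNReal.toReal_nonneg]
    exact ENNReal.toReal_mono ENNReal.coe_ne_top (hlt t ht)
  have hint' : IntegrableOn (fun t ↦ |u t - c|) (ball x r) μ := by
    refine Integrable.mono' (g := fun _ ↦ |u x - c| + K * r) (integrableOn_const hBt)
      (hu.continuous.measurable.sub_const c).abs.aestronglyMeasurable ?_
    rw [ae_restrict_iff' measurableSet_ball]
    refine ae_of_all _ fun t ht ↦ ?_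
    rw [Real.norm_eq_abs, abs_abs]
    have h1 := hK.dist_le_mul t (ball_subset_closedBall ht) x (mem_closedBall_self hr.le)
    rw [mem_ball] at ht
    have h2 : (K : ℝ) * dist t x ≤ K * r := by gcongr
    rw [Real.dist_eq] at h1
    linarith [abs_sub_le (u t) (u x) c]
  have hI : ∫⁻ y in ball x r, ENNReal.ofReal |u y - c| ∂μ ≤
      ENNReal.ofReal (CP * r) * ∫⁻ y in ball x r, lipConst u y ∂μ := by
    rw [setAverage_eq, setAverage_eq, smul_eq_mul, smul_eq_mul, mul_left_comm,
      mul_le_mul_iff_right₀ (inv_pos.2 hm0)] at hp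
    have := ENNReal.ofReal_le_ofReal hp
    rw [ENNReal.ofReal_mul (by positivity), ofReal_integral_eq_lintegral_ofReal hint
      (ae_of_all _ fun y ↦ ENNReal.toReal_nonneg), ofReal_integral_eq_lintegral_ofReal hint'
      (ae_of_all _ fun y ↦ abs_nonneg _)] at this
    refine this.trans ?_
    gcongr
    exact ENNReal.ofReal_toReal_le
  calc doubleOsc μ u (ball x r)
      ≤ ∫⁻ y in ball x r, ∫⁻ w in ball x r,
        ENNReal.ofReal |u y - c| + ENNReal.ofReal |u w - c| ∂μ ∂μ := by
        refine lintegral_mono fun y ↦ lintegral_mono fun w ↦ ?_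
        rw [← ENNReal.ofReal_add (abs_nonneg _) (abs_nonneg _)]
        refine ENNReal.ofReal_le_ofReal ?_
        rw [abs_sub_comm (u w)]
        exact abs_sub_le _ _ _
    _ = 2 * μ (ball x r) * ∫⁻ y in ball x r, ENNReal.ofReal |u y - c| ∂μ := by
        simp only [lintegral_add_left measurable_const]
        rw [lintegral_add_right _ measurable_const]
        simp only [setLIntegral_const]
        rw [lintegral_mul_const' _ _ hBt]
        ring
    _ ≤ _ := by gcongr

variable [SecondCountableTopology X] [SFinite μ]

theorem lintegral_meanOsc_lt_top (hP : SupportsPoincare μ CP) (hCP : 0 < CP)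
    (h : IsDoublingWith μ Cd) (hCd : 1 ≤ Cd) {f : X → ℝ} (hf : Measurable f)
    (hfin : totVarOn μ f univ < ⊤) : ∫⁻ x, meanOsc μ f x ∂μ < ⊤ := by
  simp only [totVarOn, iInf_lt_iff] at hfin
  obtain ⟨us, hus, hlim, hfin⟩ := hfin
  set A : ℝ≥0∞ := 2 * ENNReal.ofReal (CP * 4) with hA
  have hAt : A ≠ ⊤ := by finiteness
  have hmeas := fun i ↦ (hus i).measurable_lipConst
  have hpt : ∀ x, meanOsc μ f x ≤ liminf (fun i ↦
      (μ (ball x 4))⁻¹ * ∫⁻ y in ball x 4, A * lipConst (us i) y ∂μ) atTop := by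
    intro x
    have hBt : μ (ball x 4) ≠ ⊤ := (h.measure_ball_lt_top hCd x 4).ne
    have hB0 : μ (ball x 4) ≠ 0 := (h.measure_ball_pos x (by norm_num)).ne'
    have he : Tendsto (fun i ↦ 2 * (μ (ball x 4))⁻¹ *
        ∫⁻ y in ball x 4, ENNReal.ofReal |us i y - f y| ∂μ) atTop (𝓝 0) := by
      have h1 := hlim (closedBall x 4) isClosed_closedBall isBounded_closedBall (subset_univ _)
      have h2 : Tendsto (fun i ↦ ∫⁻ y in ball x 4, ENNReal.ofReal |us i y - f y| ∂μ) atTop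
          (𝓝 0) := tendsto_of_tendsto_of_tendsto_of_le_of_le tendsto_const_nhds h1
            (fun _ ↦ zero_le) fun i ↦ lintegral_mono_set ball_subset_closedBall
      have := ENNReal.Tendsto.const_mul (a := 2 * (μ (ball x 4))⁻¹) h2
        (.inr (ENNReal.mul_ne_top (by finiteness) (ENNReal.inv_ne_top.2 hB0)))
      rwa [mul_zero] at this
    rw [← ENNReal.liminf_add_of_right_tendsto_zero he]
    refine le_liminf_of_le (by isBoundedDefault) (Eventually.of_forall fun i ↦ ?_)
    have h3 := (doubleOsc_le_add (μ := μ) hf (hus i).continuous.measurable hBt).trans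
      (add_le_add_left (hP.doubleOsc_le hCP h hCd (hus i) x (show (0:ℝ) < 4 by norm_num)) _)
    rw [Pi.add_apply, lintegral_const_mul' _ _ hAt]
    calc meanOsc μ f x ≤ (μ (ball x 4))⁻¹ * ((μ (ball x 4))⁻¹ * _) :=
          mul_le_mul' le_rfl (mul_le_mul' le_rfl h3)
      _ = (μ (ball x 4) * (μ (ball x 4))⁻¹) * ((μ (ball x 4))⁻¹ *
          (A * ∫⁻ y in ball x 4, lipConst (us i) y ∂μ)) + (μ (ball x 4) * (μ (ball x 4))⁻¹) *
          (2 * (μ (ball x 4))⁻¹ * ∫⁻ y in ball x 4, ENNReal.ofReal |us i y - f y| ∂μ) := by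
          rw [hA]; ring
      _ = _ := by rw [ENNReal.mul_inv_cancel hB0 hBt, one_mul, one_mul]
  calc ∫⁻ x, meanOsc μ f x ∂μ ≤ ∫⁻ x, liminf (fun i ↦
        (μ (ball x 4))⁻¹ * ∫⁻ y in ball x 4, A * lipConst (us i) y ∂μ) atTop ∂μ :=
        lintegral_mono hpt
    _ ≤ liminf (fun i ↦ ∫⁻ x,
        (μ (ball x 4))⁻¹ * ∫⁻ y in ball x 4, A * lipConst (us i) y ∂μ ∂μ) atTop :=
        lintegral_liminf_le fun i ↦ (measurable_measure_ball 4).inv.mul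
          (measurable_lintegral_ball (((hmeas i).const_mul A).comp measurable_snd) 4)
    _ ≤ liminf (fun i ↦ Cd * A * ∫⁻ x, lipConst (us i) x ∂μ) atTop := by
        refine liminf_le_liminf (Eventually.of_forall fun i ↦ ?_)
        refine (lintegral_ballAverage_le h hCd ((hmeas i).const_mul A) (by norm_num)).trans_eq ?_
        rw [lintegral_const_mul' _ _ hAt, ← mul_assoc]
    _ = Cd * A * liminf (fun i ↦ ∫⁻ x, lipConst (us i) x ∂μ) atTop :=
        ENNReal.liminf_const_mul_of_ne_top (by finiteness)
    _ < ⊤ := by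
        simp only [Measure.restrict_univ] at hfin
        exact ENNReal.mul_lt_top (by finiteness) hfin

/-- A bounded function of bounded variation lies at finite `L¹`-distance from a Lipschitz function
with integrable gradient. -/
theorem exists_gradPair_lintegral_lt_top (hP : SupportsPoincare μ CP) (hCP : 0 < CP)
    (h : IsDoublingWith μ Cd) (hCd : 1 ≤ Cd) {f : X → ℝ} (hf : Measurable f)
    {T : ℝ} (hT : ∀ x, |f x| ≤ T) (hfin : totVarOn μ f univ < ⊤) :
    ∃ w v : X → ℝ, GradPair w v ∧ ∫⁻ x, ENNReal.ofReal (v x) ∂μ < ⊤ ∧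
      ∫⁻ x, ENNReal.ofReal |w x - f x| ∂μ < ⊤ := by
  have hosc := lintegral_meanOsc_lt_top hP hCP h hCd hf hfin
  refine ⟨_, _, gradPair_avg h hCd hf hT, ?_, ?_⟩
  · have : (0 : ℝ) ≤ (2 * Cd ^ 2 + (2 * Cd ^ 2) ^ 2) * Cd ^ 4 := by positivity
    simp only [ENNReal.ofReal_mul this]
    rw [lintegral_const_mul' _ _ ENNReal.ofReal_ne_top]
    refine ENNReal.mul_lt_top ENNReal.ofReal_lt_top
      ((lintegral_avg_meanOsc_le h hCd hf).trans_lt ?_)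
    exact ENNReal.mul_lt_top (by finiteness) (ENNReal.mul_lt_top ENNReal.coe_lt_top hosc)
  · refine (lintegral_abs_sub_avg_le h hCd hf hT).trans_lt ?_
    exact ENNReal.mul_lt_top ENNReal.coe_lt_top (ENNReal.mul_lt_top (by finiteness) hosc)

end Poincare

section TotalVariation

variable {X : Type u} [PseudoMetricSpace X]

theorem LocallyLipschitzOnSet.mono {u : X → ℝ} {V W : Set X} (hu : LocallyLipschitzOnSet u W)
    (h : V ⊆ W) : LocallyLipschitzOnSet u V :=
  fun K hK hKb hKV ↦ hu K hK hKb (hKV.trans h)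

theorem lipConst_comp_le {θ : ℝ → ℝ} (hθ : LipschitzWith 1 θ) (u : X → ℝ) (x : X) :
    lipConst (θ ∘ u) x ≤ lipConst u x := by
  refine liminf_le_liminf ?_
  filter_upwards [self_mem_nhdsWithin] with r hr
  have hr0 : 0 < r := hr
  refine iSup₂_mono fun y _ ↦ ENNReal.ofReal_le_ofReal ?_
  refine div_le_div_of_nonneg_right ?_ hr0.le
  simpa [Real.dist_eq] using hθ.dist_le_mul (u y) (u x)

variable [MeasurableSpace X] {μ : Measure X}

theorem TendstoL1loc.mono {u : ℕ → X → ℝ} {f : X → ℝ} {V W : Set X} (hu : TendstoL1loc μ u f W)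
    (h : V ⊆ W) : TendstoL1loc μ u f V :=
  fun K hK hKb hKV ↦ hu K hK hKb (hKV.trans h)

theorem TendstoL1loc.congr {u : ℕ → X → ℝ} {f g : X → ℝ} {W : Set X}
    (hu : TendstoL1loc μ u f W) (h : f =ᵐ[μ] g) : TendstoL1loc μ u g W := by
  intro K hK hKb hKV
  refine (hu K hK hKb hKV).congr fun i ↦ lintegral_congr_ae ?_
  filter_upwards [ae_restrict_of_ae h] with x hx
  rw [hx]

theorem totVarOn_le {f : X → ℝ} {W : Set X} {us : ℕ → X → ℝ}
    (hus : ∀ i, LocallyLipschitzOnSet (us i) W) (hlim : TendstoL1loc μ us f W) :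
    totVarOn μ f W ≤ liminf (fun i ↦ ∫⁻ x in W, lipConst (us i) x ∂μ) atTop :=
  iInf_le_of_le us (iInf_le_of_le hus (iInf_le _ hlim))

theorem totVarOn_mono (μ : Measure X) (f : X → ℝ) {V W : Set X} (h : V ⊆ W) :
    totVarOn μ f V ≤ totVarOn μ f W :=
  le_iInf fun _ ↦ le_iInf fun hus ↦ le_iInf fun hlim ↦
    (totVarOn_le (fun i ↦ (hus i).mono h) (hlim.mono h)).trans
      (liminf_le_liminf (Eventually.of_forall fun _ ↦ lintegral_mono_set h))

theorem totVarOn_congr_ae {f g : X → ℝ} (h : f =ᵐ[μ] g) (W : Set X) :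
    totVarOn μ f W = totVarOn μ g W :=
  le_antisymm
    (le_iInf fun _ ↦ le_iInf fun hus ↦ le_iInf fun hlim ↦ totVarOn_le hus (hlim.congr h.symm))
    (le_iInf fun _ ↦ le_iInf fun hus ↦ le_iInf fun hlim ↦ totVarOn_le hus (hlim.congr h))

theorem totVarOn_empty (μ : Measure X) (f : X → ℝ) : totVarOn μ f ∅ = 0 := by
  refine le_antisymm ((totVarOn_le (us := fun _ _ ↦ 0) (fun _ K _ _ hK ↦ ⟨0, ?_⟩)
    fun K _ _ hK ↦ ?_).trans_eq ?_) zero_le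
  · rw [subset_empty_iff.1 hK]
    exact lipschitzOnWith_empty _ _
  · simp [subset_empty_iff.1 hK]
  · simp

theorem totVarOn_comp_le {θ : ℝ → ℝ} (hθ : LipschitzWith 1 θ) (f : X → ℝ) (W : Set X) :
    totVarOn μ (θ ∘ f) W ≤ totVarOn μ f W := by
  refine le_iInf fun us ↦ le_iInf fun hus ↦ le_iInf fun hlim ↦
    (totVarOn_le (us := fun i ↦ θ ∘ us i) (fun i K hK hKb hKW ↦ ?_) fun K hK hKb hKW ↦ ?_).trans
      (liminf_le_liminf (Eventually.of_forall fun i ↦ lintegral_mono fun x ↦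
        lipConst_comp_le hθ (us i) x))
  · obtain ⟨L, hL⟩ := hus i K hK hKb hKW
    exact ⟨1 * L, hθ.comp_lipschitzOnWith hL⟩
  · refine tendsto_of_tendsto_of_tendsto_of_le_of_le tendsto_const_nhds (hlim K hK hKb hKW)
      (fun _ ↦ zero_le) fun i ↦ lintegral_mono fun x ↦ ENNReal.ofReal_le_ofReal ?_
    simpa [Real.dist_eq] using hθ.dist_le_mul (us i x) (f x)

theorem lipschitzWith_clamp (T : ℝ) : LipschitzWith 1 fun t : ℝ ↦ max (-T) (min T t) :=
  (LipschitzWith.id.const_min T).const_max (-T)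

theorem abs_clamp_le {T : ℝ} (hT : 0 ≤ T) (t : ℝ) : |max (-T) (min T t)| ≤ T :=
  abs_le.2 ⟨le_max_left _ _, max_le (by linarith) (min_le_left _ _)⟩

theorem abs_clamp_sub_le {T : ℝ} (hT : 0 ≤ T) (t : ℝ) : |max (-T) (min T t) - t| ≤ |t| := by
  rcases le_total 0 t with ht | ht <;> rcases le_total T t with h1 | h1 <;>
    rcases le_total (-T) t with h2 | h2 <;>
    simp [*, abs_of_nonneg, abs_of_nonpos] <;> grind

/-- Truncations of a locally integrable function converge in `L¹` on sets where it is integrable. -/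
theorem tendsto_lintegral_abs_clamp_sub {X : Type u} [MeasurableSpace X] {μ : Measure X}
    {f : X → ℝ} (hf : Measurable f) {K : Set X}
    (hK : IntegrableOn f K μ) :
    Tendsto (fun n : ℕ ↦ ∫⁻ x in K, ENNReal.ofReal |max (-(n : ℝ)) (min n (f x)) - f x| ∂μ) atTop
      (𝓝 0) := by
  have := tendsto_lintegral_of_dominated_convergence (μ := μ.restrict K) (f := fun _ ↦ 0)
    (F := fun (n : ℕ) x ↦ ENNReal.ofReal |max (-(n : ℝ)) (min n (f x)) - f x|)
    (fun x ↦ ENNReal.ofReal |f x|) (fun n ↦ by fun_prop)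
    (fun n ↦ ae_of_all _ fun x ↦ ENNReal.ofReal_le_ofReal
      (abs_clamp_sub_le n.cast_nonneg (f x)))
    (by simpa only [← Real.enorm_eq_ofReal_abs] using hK.2.ne) (ae_of_all _ fun x ↦ ?_)
  · simpa using this
  · refine tendsto_const_nhds.congr' ?_
    filter_upwards [eventually_ge_atTop ⌈|f x|⌉₊] with n hn
    have h1 : |f x| ≤ n := (Nat.le_ceil _).trans (by exact_mod_cast hn)
    rw [min_eq_right ((le_abs_self _).trans h1), max_eq_right (abs_le.1 h1).1]
    simp

end TotalVariation

section Gluing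

theorem exists_lipschitzWith_separating {X : Type u} [PseudoMetricSpace X] {s t : Set X}
    (hs : IsClosed s) (ht : IsCompact t) (hst : Disjoint s t) (a b : ℝ) :
    ∃ (L : ℝ≥0) (θ : X → ℝ), LipschitzWith L θ ∧ (∀ x ∈ s, θ x = a) ∧ ∀ x ∈ t, θ x = b := by
  obtain ⟨δ, hδ, hsub⟩ := ht.exists_thickening_subset_open hs.isOpen_compl
    (disjoint_left.1 hst.symm)
  have h1 := lipschitzWith_thickenedIndicator hδ t
  refine ⟨_, fun x ↦ a + (b - a) * (thickenedIndicator hδ t x : ℝ),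
    (LipschitzWith.of_dist_le_mul (K := ‖b - a‖₊ * δ.toNNReal⁻¹) fun x y ↦ ?_), fun x hx ↦ ?_,
    fun x hx ↦ ?_⟩
  · have h2 := h1.dist_le_mul x y
    rw [NNReal.dist_eq] at h2
    rw [Real.dist_eq, add_sub_add_left_eq_sub, ← mul_sub, abs_mul, NNReal.coe_mul, coe_nnnorm,
      Real.norm_eq_abs, mul_assoc]
    exact mul_le_mul_of_nonneg_left h2 (abs_nonneg _)
  · have h2 := thickenedIndicator_zero hδ t fun h ↦ hsub h hx
    simp [h2]
  · have h2 := thickenedIndicator_one hδ t hx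
    simp [h2]

theorem blend_grad_le {θ L f u₁ v₁ u₂ v₂ φ ψ : ℝ} (hL : 0 ≤ L) (hv₁ : 0 ≤ v₁) (hv₂ : 0 ≤ v₂)
    (hφ : φ = max 0 (min 1 θ)) (hψ : ψ = L * max 0 (min 1 (2 - |2 * θ - 1|))) :
    φ * v₁ + (1 - φ) * v₂ + ψ * |u₁ - u₂| ≤
      (if -1 ≤ θ then v₁ + L * |u₁ - f| else 0) + (if θ ≤ 2 then v₂ + L * |u₂ - f| else 0) := by
  rcases lt_or_ge θ (-1) with h1 | h1
  · rw [min_eq_right (by linarith), max_eq_left (by linarith)] at hφ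
    rw [abs_of_nonpos (by linarith), min_eq_right (by linarith), max_eq_left (by linarith)] at hψ
    rw [if_neg (by linarith), if_pos (by linarith), hφ, hψ]
    have : 0 ≤ L * |u₂ - f| := by positivity
    linarith
  rcases lt_or_ge 2 θ with h2 | h2
  · rw [min_eq_left (by linarith), max_eq_right (by linarith)] at hφ
    rw [abs_of_nonneg (by linarith), min_eq_right (by linarith), max_eq_left (by linarith)] at hψ
    rw [if_pos (by linarith), if_neg (by linarith), hφ, hψ]
    have : 0 ≤ L * |u₁ - f| := by positivity
    linarith
  rw [if_pos h1, if_pos h2]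
  have hφ0 : 0 ≤ φ := hφ ▸ le_max_left _ _
  have hφ1 : φ ≤ 1 := hφ ▸ max_le zero_le_one (min_le_left _ _)
  have hψL : ψ ≤ L := by
    rw [hψ]
    exact mul_le_of_le_one_right hL (max_le zero_le_one (min_le_left _ _))
  have h3 : |u₁ - u₂| ≤ |u₁ - f| + |u₂ - f| := by
    rw [abs_sub_comm u₂ f]
    exact abs_sub_le _ _ _
  have h4 : ψ * |u₁ - u₂| ≤ L * (|u₁ - f| + |u₂ - f|) := by gcongr
  nlinarith [mul_nonneg hφ0 hv₂, mul_nonneg (sub_nonneg.2 hφ1) hv₁]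

theorem blend_sub_le {θ f u₁ u₂ φ : ℝ} (hφ : φ = max 0 (min 1 θ)) :
    |φ * u₁ + (1 - φ) * u₂ - f| ≤
      (if -1 ≤ θ then |u₁ - f| else 0) + (if θ ≤ 2 then |u₂ - f| else 0) := by
  rcases lt_or_ge θ (-1) with h1 | h1
  · rw [min_eq_right (by linarith), max_eq_left (by linarith)] at hφ
    rw [if_neg (by linarith), if_pos (by linarith), hφ]
    simp
  rcases lt_or_ge 2 θ with h2 | h2
  · rw [min_eq_left (by linarith), max_eq_right (by linarith)] at hφ
    rw [if_pos (by linarith), if_neg (by linarith), hφ]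
    simp
  rw [if_pos h1, if_pos h2]
  have hφ0 : 0 ≤ φ := hφ ▸ le_max_left _ _
  have hφ1 : φ ≤ 1 := hφ ▸ max_le zero_le_one (min_le_left _ _)
  rw [show φ * u₁ + (1 - φ) * u₂ - f = φ * (u₁ - f) + (1 - φ) * (u₂ - f) by ring]
  refine (abs_add_le _ _).trans ?_
  rw [abs_mul, abs_mul, abs_of_nonneg hφ0, abs_of_nonneg (sub_nonneg.2 hφ1)]
  gcongr
  · exact mul_le_of_le_one_left (abs_nonneg _) hφ1
  · exact mul_le_of_le_one_left (abs_nonneg _) (by linarith)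

theorem lintegral_ofReal_le_of_le_ite_add_ite {X : Type u} [MeasurableSpace X] {μ : Measure X}
    {Q K₁ K₂ : Set X} (hQ : MeasurableSet Q)
    (hK₁ : MeasurableSet K₁) (hK₂ : MeasurableSet K₂) {F G₁ G₂ : X → ℝ} (hG₁ : Measurable G₁)
    {p q : X → Prop} [DecidablePred p] [DecidablePred q]
    (hp : ∀ x ∈ Q, p x → x ∈ K₁) (hq : ∀ x ∈ Q, q x → x ∈ K₂)
    (h : ∀ x ∈ Q, F x ≤ (if p x then G₁ x else 0) + (if q x then G₂ x else 0)) :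
    ∫⁻ x in Q, ENNReal.ofReal (F x) ∂μ ≤
      (∫⁻ x in K₁, ENNReal.ofReal (G₁ x) ∂μ) + ∫⁻ x in K₂, ENNReal.ofReal (G₂ x) ∂μ := by
  calc ∫⁻ x in Q, ENNReal.ofReal (F x) ∂μ
      ≤ ∫⁻ x in Q, K₁.indicator (fun x ↦ ENNReal.ofReal (G₁ x)) x +
        K₂.indicator (fun x ↦ ENNReal.ofReal (G₂ x)) x ∂μ := by
        refine setLIntegral_mono' hQ fun x hx ↦ (ENNReal.ofReal_le_ofReal (h x hx)).trans ?_
        refine ENNReal.ofReal_add_le.trans (add_le_add ?_ ?_)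
        · split_ifs with hpx
          · rw [indicator_of_mem (hp x hx hpx)]
          · simp
        · split_ifs with hqx
          · rw [indicator_of_mem (hq x hx hqx)]
          · simp
    _ = ∫⁻ x in Q, K₁.indicator (fun x ↦ ENNReal.ofReal (G₁ x)) x ∂μ +
        ∫⁻ x in Q, K₂.indicator (fun x ↦ ENNReal.ofReal (G₂ x)) x ∂μ :=
        lintegral_add_left (hG₁.ennreal_ofReal.indicator hK₁) _
    _ ≤ ∫⁻ x, K₁.indicator (fun x ↦ ENNReal.ofReal (G₁ x)) x ∂μ +
        ∫⁻ x, K₂.indicator (fun x ↦ ENNReal.ofReal (G₂ x)) x ∂μ := by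
        gcongr <;> exact Measure.restrict_le_self
    _ = _ := by rw [lintegral_indicator hK₁, lintegral_indicator hK₂]

variable {X : Type u} [MetricSpace X] [MeasurableSpace X] [BorelSpace X] {μ : Measure X}

theorem GradPair.lintegral_add_mul_le {u v : X → ℝ} (h : GradPair u v) (L : ℝ≥0) (f : X → ℝ)
    {K : Set X} {a b : ℝ≥0∞} (ha : ∫⁻ x in K, ENNReal.ofReal (v x) ∂μ ≤ a)
    (hb : ∫⁻ x in K, ENNReal.ofReal |u x - f x| ∂μ ≤ b) :
    ∫⁻ x in K, ENNReal.ofReal (v x + L * |u x - f x|) ∂μ ≤ a + L * b := by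
  have e : ∀ x, ENNReal.ofReal (v x + L * |u x - f x|) =
      ENNReal.ofReal (v x) + L * ENNReal.ofReal |u x - f x| := fun x ↦ by
    rw [ENNReal.ofReal_add (h.grad_nonneg x) (by positivity), ENNReal.ofReal_mul L.coe_nonneg,
      ENNReal.ofReal_coe_nnreal]
  simp only [e]
  rw [lintegral_add_left h.continuous_grad.measurable.ennreal_ofReal,
    lintegral_const_mul' _ _ ENNReal.coe_ne_top]
  gcongr

variable [ProperSpace X] [IsLocallyFiniteMeasure μ]

/-- Approximations of `f` on two open sets can be glued to an approximation on a compact subset of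
their union, with almost no loss in the total gradient. -/
theorem exists_gradPair_glue (hG : IsGeodesic X) {A B Q : Set X} (hA : IsOpen A) (hB : IsOpen B)
    (hQ : IsCompact Q) (hQAB : Q ⊆ A ∪ B) {f : X → ℝ} (hf : Measurable f)
    (hfA : totVarOn μ f A ≠ ⊤) (hfB : totVarOn μ f B ≠ ⊤) {ε : ℝ≥0∞} (hε : ε ≠ 0) :
    ∃ u v : X → ℝ, GradPair u v ∧
      ∫⁻ x in Q, ENNReal.ofReal (v x) ∂μ ≤ totVarOn μ f A + totVarOn μ f B + ε ∧
      ∫⁻ x in Q, ENNReal.ofReal |u x - f x| ∂μ ≤ ε := by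
  obtain ⟨L, θ, hθ, hθA, hθB⟩ := exists_lipschitzWith_separating (a := -2) (b := 3)
    (hQ.isClosed.sdiff hA) (hQ.diff hB)
    (disjoint_left.2 fun x hx hx' ↦ (hQAB hx.1).elim hx.2 hx'.2)
  set K₁ := Q ∩ {x | -1 ≤ θ x} with hK₁
  set K₂ := Q ∩ {x | θ x ≤ 2} with hK₂
  have hK₁c : IsCompact K₁ := hQ.inter_right (isClosed_le continuous_const hθ.continuous)
  have hK₂c : IsCompact K₂ := hQ.inter_right (isClosed_le hθ.continuous continuous_const)
  have hK₁A : K₁ ⊆ A := fun x hx ↦ by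
    by_contra hxA
    have h1 : -1 ≤ θ x := hx.2
    rw [hθA x ⟨hx.1, hxA⟩] at h1
    norm_num at h1
  have hK₂B : K₂ ⊆ B := fun x hx ↦ by
    by_contra hxB
    have h1 : θ x ≤ 2 := hx.2
    rw [hθB x ⟨hx.1, hxB⟩] at h1
    norm_num at h1
  set δ : ℝ≥0∞ := ε / (2 + 2 * L) with hδ
  have hδ0 : δ ≠ 0 := ENNReal.div_ne_zero.2 ⟨hε, by finiteness⟩
  have hδε : (2 + 2 * L) * δ ≤ ε := ENNReal.mul_div_le
  obtain ⟨u₁, v₁, h₁, hv₁, hu₁⟩ := exists_gradPair_of_totVarOn (μ := μ) hG hA hK₁c hK₁A hfA hδ0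
  obtain ⟨u₂, v₂, h₂, hv₂, hu₂⟩ := exists_gradPair_of_totVarOn (μ := μ) hG hB hK₂c hK₂B hfB hδ0
  have hclamp := gradPair_clamp hθ
  have hum : Measurable fun x ↦ |u₁ x - f x| := (h₁.continuous_fun.measurable.sub hf).abs
  refine ⟨_, _, hclamp.blend (fun x ↦ le_max_left _ _)
    (fun x ↦ max_le zero_le_one (min_le_left _ _)) h₁ h₂, ?_, ?_⟩
  · refine (lintegral_ofReal_le_of_le_ite_add_ite (μ := μ) hQ.isClosed.measurableSet
      hK₁c.isClosed.measurableSet hK₂c.isClosed.measurableSet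
      (G₁ := fun x ↦ v₁ x + L * |u₁ x - f x|) (G₂ := fun x ↦ v₂ x + L * |u₂ x - f x|)
      (h₁.continuous_grad.measurable.add (hum.const_mul _))
      (p := fun x ↦ -1 ≤ θ x) (q := fun x ↦ θ x ≤ 2) (fun x hx hp ↦ ⟨hx, hp⟩)
      (fun x hx hp ↦ ⟨hx, hp⟩) fun x _ ↦ blend_grad_le L.coe_nonneg (h₁.grad_nonneg x)
        (h₂.grad_nonneg x) rfl rfl).trans ?_
    calc _ ≤ (totVarOn μ f A + δ + L * δ) + (totVarOn μ f B + δ + L * δ) :=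
          add_le_add (h₁.lintegral_add_mul_le L f hv₁ hu₁) (h₂.lintegral_add_mul_le L f hv₂ hu₂)
      _ = totVarOn μ f A + totVarOn μ f B + (2 + 2 * L) * δ := by ring
      _ ≤ _ := by gcongr
  · refine (lintegral_ofReal_le_of_le_ite_add_ite (μ := μ) hQ.isClosed.measurableSet
      hK₁c.isClosed.measurableSet hK₂c.isClosed.measurableSet
      (G₁ := fun x ↦ |u₁ x - f x|) (G₂ := fun x ↦ |u₂ x - f x|) hum
      (p := fun x ↦ -1 ≤ θ x) (q := fun x ↦ θ x ≤ 2) (fun x hx hp ↦ ⟨hx, hp⟩)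
      (fun x hx hp ↦ ⟨hx, hp⟩) fun x _ ↦ blend_sub_le rfl).trans ?_
    calc _ ≤ δ + δ := add_le_add hu₁ hu₂
      _ = 2 * δ := (two_mul δ).symm
      _ ≤ (2 + 2 * L) * δ := by gcongr; exact le_self_add
      _ ≤ ε := hδε

end Gluing

section GlobalApproximation

theorem exists_setLIntegral_le_dist_le {X : Type u} [PseudoMetricSpace X] [MeasurableSpace X]
    [OpensMeasurableSpace X] {μ : Measure X} {g : X → ℝ≥0∞} (hg : ∫⁻ x, g x ∂μ ≠ ⊤)
    {ε : ℝ≥0∞} (hε : ε ≠ 0) (o : X) (R : ℝ) :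
    ∃ R' ≥ R, ∫⁻ x in {x | R' ≤ dist x o}, g x ∂μ ≤ ε := by
  have hm : ∀ r : ℝ, MeasurableSet {x | r ≤ dist x o} := fun r ↦
    (isClosed_le continuous_const (continuous_id.dist continuous_const)).measurableSet
  have hν : IsFiniteMeasure (μ.withDensity g) := isFiniteMeasure_withDensity hg
  have h1 : Tendsto (fun n : ℕ ↦ μ.withDensity g {x | (n : ℝ) ≤ dist x o}) atTop (𝓝 0) := by
    have h2 : (⋂ n : ℕ, {x : X | (n : ℝ) ≤ dist x o}) = ∅ := by
      refine eq_empty_of_forall_notMem fun x hx ↦ ?_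
      obtain ⟨n, hn⟩ := exists_nat_gt (dist x o)
      exact (mem_iInter.1 hx n).not_gt hn
    rw [← measure_empty (μ := μ.withDensity g), ← h2]
    refine tendsto_measure_iInter_atTop (fun n ↦ (hm n).nullMeasurableSet)
      (fun m n hmn x hx ↦ ?_) ⟨0, measure_ne_top _ _⟩
    exact (Nat.cast_le.2 hmn).trans (show (n : ℝ) ≤ dist x o from hx)
  obtain ⟨n, hn1, hn2⟩ := ((h1.eventually (eventually_le_nhds (pos_iff_ne_zero.2 hε))).and
    (tendsto_natCast_atTop_atTop.eventually_ge_atTop R)).exists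
  rw [withDensity_apply _ (hm n)] at hn1
  exact ⟨n, hn2, hn1⟩

variable {X : Type u} [MetricSpace X] [MeasurableSpace X] [BorelSpace X] {μ : Measure X}
  [ProperSpace X] [IsLocallyFiniteMeasure μ]

theorem exists_gradPair_global_of_bounded {Cd : ℝ≥0} {CP : ℝ} (hG : IsGeodesic X)
    (hP : SupportsPoincare μ CP) (hCP : 0 < CP) (h : IsDoublingWith μ Cd) (hCd : 1 ≤ Cd)
    {A B : Set X} (hA : IsOpen A) (hB : IsOpen B) (hAB : A ∪ B = univ) {f : X → ℝ}
    (hf : Measurable f) {T : ℝ} (hT : ∀ x, |f x| ≤ T) (hfin : totVarOn μ f univ < ⊤)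
    {ε : ℝ≥0∞} (hε : ε ≠ 0) (o : X) (R : ℝ) :
    ∃ u v : X → ℝ, GradPair u v ∧
      ∫⁻ x, ENNReal.ofReal (v x) ∂μ ≤ totVarOn μ f A + totVarOn μ f B + ε ∧
      ∫⁻ x in closedBall o R, ENNReal.ofReal |u x - f x| ∂μ ≤ ε := by
  obtain ⟨w, v₂, h₂, hv₂, hw⟩ := exists_gradPair_lintegral_lt_top hP hCP h hCd hf hT hfin
  have hwm : Measurable fun x ↦ |w x - f x| := (h₂.continuous_fun.measurable.sub hf).abs
  set δ : ℝ≥0∞ := ε / 4 with hδ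
  have hδ0 : δ ≠ 0 := ENNReal.div_ne_zero.2 ⟨hε, by finiteness⟩
  have hδε : 4 * δ ≤ ε := ENNReal.mul_div_le
  have hgfin : ∫⁻ x, ENNReal.ofReal (v₂ x) + ENNReal.ofReal |w x - f x| ∂μ ≠ ⊤ := by
    rw [lintegral_add_left h₂.continuous_grad.measurable.ennreal_ofReal]
    exact (ENNReal.add_lt_top.2 ⟨hv₂, hw⟩).ne
  obtain ⟨R', hRR', htail⟩ := exists_setLIntegral_le_dist_le hgfin hδ0 o R
  have hmono : ∀ W : Set X, totVarOn μ f W ≠ ⊤ := fun W ↦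
    ((totVarOn_mono μ f (subset_univ W)).trans_lt hfin).ne
  obtain ⟨u₁, v₁, h₁, hv₁, hu₁⟩ := exists_gradPair_glue (μ := μ) hG hA hB
    (isCompact_closedBall o (R' + 3)) (hAB ▸ subset_univ _) hf (hmono A) (hmono B) hδ0
  have hum : Measurable fun x ↦ |u₁ x - f x| := (h₁.continuous_fun.measurable.sub hf).abs
  have hθ : LipschitzWith 1 fun x ↦ R' + 2 - dist x o :=
    LipschitzWith.of_dist_le_mul fun x y ↦ by
      rw [Real.dist_eq, NNReal.coe_one, one_mul, sub_sub_sub_cancel_left, abs_sub_comm]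
      exact abs_dist_sub_le x y o
  have hclosed : MeasurableSet {x | R' ≤ dist x o} :=
    (isClosed_le continuous_const (continuous_id.dist continuous_const)).measurableSet
  refine ⟨_, _, (gradPair_clamp hθ).blend (fun x ↦ le_max_left _ _)
    (fun x ↦ max_le zero_le_one (min_le_left _ _)) h₁ h₂, ?_, ?_⟩
  · rw [← setLIntegral_univ]
    refine (lintegral_ofReal_le_of_le_ite_add_ite (μ := μ) MeasurableSet.univ
      (K₁ := closedBall o (R' + 3)) (K₂ := {x | R' ≤ dist x o}) measurableSet_closedBall hclosed
      (G₁ := fun x ↦ v₁ x + (1 : ℝ≥0) * |u₁ x - f x|)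
      (G₂ := fun x ↦ v₂ x + (1 : ℝ≥0) * |w x - f x|)
      (h₁.continuous_grad.measurable.add (hum.const_mul _))
      (p := fun x ↦ -1 ≤ R' + 2 - dist x o) (q := fun x ↦ R' + 2 - dist x o ≤ 2)
      (fun x _ hp ↦ mem_closedBall.2 (by linarith)) (fun x _ hp ↦ show R' ≤ dist x o by linarith)
      fun x _ ↦ blend_grad_le (NNReal.coe_nonneg _) (h₁.grad_nonneg x)
        (h₂.grad_nonneg x) rfl rfl).trans ?_
    refine (add_le_add (h₁.lintegral_add_mul_le 1 f hv₁ hu₁)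
      ((h₂.lintegral_add_mul_le 1 f le_rfl le_rfl))).trans ?_
    rw [lintegral_add_left h₂.continuous_grad.measurable.ennreal_ofReal] at htail
    calc _ = totVarOn μ f A + totVarOn μ f B + δ + δ + _ := by
          rw [ENNReal.coe_one, one_mul, one_mul]
      _ ≤ totVarOn μ f A + totVarOn μ f B + δ + δ + δ := by gcongr
      _ ≤ totVarOn μ f A + totVarOn μ f B + 4 * δ := by
          rw [show totVarOn μ f A + totVarOn μ f B + δ + δ + δ =
            totVarOn μ f A + totVarOn μ f B + 3 * δ by ring]
          gcongr
          norm_num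
      _ ≤ _ := by gcongr
  · have hsub : closedBall o R ⊆ closedBall o (R' + 3) := closedBall_subset_closedBall (by linarith)
    calc _ = ∫⁻ x in closedBall o R, ENNReal.ofReal |u₁ x - f x| ∂μ := by
          refine setLIntegral_congr_fun measurableSet_closedBall fun x hx ↦ ?_
          have hx' := mem_closedBall.1 hx
          have : min 1 (R' + 2 - dist x o) = 1 := min_eq_left (by linarith)
          simp [this]
      _ ≤ δ := (lintegral_mono_set hsub).trans hu₁
      _ ≤ 4 * δ := le_mul_of_one_le_left (zero_le) (by norm_num)
      _ ≤ ε := hδε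

/-- A function of bounded variation is approximated by Lipschitz functions whose gradients have
almost optimal integral over the whole space. -/
theorem exists_gradPair_global {Cd : ℝ≥0} {CP : ℝ} (hG : IsGeodesic X)
    (hP : SupportsPoincare μ CP) (hCP : 0 < CP) (h : IsDoublingWith μ Cd) (hCd : 1 ≤ Cd)
    {A B : Set X} (hA : IsOpen A) (hB : IsOpen B) (hAB : A ∪ B = univ) {f : X → ℝ}
    (hf : IsBV μ f) {ε : ℝ≥0∞} (hε : ε ≠ 0) (o : X) (R : ℝ) :
    ∃ u v : X → ℝ, GradPair u v ∧
      ∫⁻ x, ENNReal.ofReal (v x) ∂μ ≤ totVarOn μ f A + totVarOn μ f B + ε ∧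
      ∫⁻ x in closedBall o R, ENNReal.ofReal |u x - f x| ∂μ ≤ ε := by
  have hfm := hf.1.aestronglyMeasurable.aemeasurable
  set g := hfm.mk f with hg
  have hgm : Measurable g := hfm.measurable_mk
  have hfg : f =ᵐ[μ] g := hfm.ae_eq_mk
  have hgint : IntegrableOn g (closedBall o R) μ :=
    (hf.1.integrableOn_isCompact (isCompact_closedBall o R)).congr (ae_restrict_of_ae hfg)
  have hε2 : ε / 2 ≠ 0 := ENNReal.div_ne_zero.2 ⟨hε, by finiteness⟩
  obtain ⟨n, hn⟩ := ((tendsto_lintegral_abs_clamp_sub hgm hgint).eventually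
    (eventually_le_nhds (pos_iff_ne_zero.2 hε2))).exists
  have hle : ∀ W, totVarOn μ (fun x ↦ max (-(n : ℝ)) (min (n : ℝ) (g x))) W ≤ totVarOn μ f W :=
    fun W ↦ (totVarOn_comp_le (lipschitzWith_clamp n) g W).trans_eq
      (totVarOn_congr_ae hfg W).symm
  have hcm : Measurable fun x ↦ max (-(n : ℝ)) (min (n : ℝ) (g x)) :=
    measurable_const.max (measurable_const.min hgm)
  obtain ⟨u, v, huv, hv, hu⟩ := exists_gradPair_global_of_bounded hG hP hCP h hCd hA hB hAB hcm
    (fun x ↦ abs_clamp_le n.cast_nonneg (g x)) ((hle univ).trans_lt hf.2) hε2 o R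
  refine ⟨u, v, huv, hv.trans ?_, ?_⟩
  · gcongr
    · exact hle A
    · exact hle B
    · exact ENNReal.half_le_self
  · calc ∫⁻ x in closedBall o R, ENNReal.ofReal |u x - f x| ∂μ
        = ∫⁻ x in closedBall o R, ENNReal.ofReal |u x - g x| ∂μ := by
          refine lintegral_congr_ae ?_
          filter_upwards [ae_restrict_of_ae hfg] with x hx
          rw [hx]
      _ ≤ ∫⁻ x in closedBall o R, ENNReal.ofReal |u x - max (-(n : ℝ)) (min (n : ℝ) (g x))| +
          ENNReal.ofReal |max (-(n : ℝ)) (min (n : ℝ) (g x)) - g x| ∂μ := by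
          refine lintegral_mono fun x ↦ ?_
          rw [← ENNReal.ofReal_add (abs_nonneg _) (abs_nonneg _)]
          exact ENNReal.ofReal_le_ofReal (abs_sub_le _ _ _)
      _ = _ := lintegral_add_left
          (huv.continuous_fun.measurable.sub hcm).abs.ennreal_ofReal _
      _ ≤ ε / 2 + ε / 2 := add_le_add hu hn
      _ = ε := ENNReal.add_halves ε

end GlobalApproximation

section StrictApproximation

theorem limsup_le_of_add_le_of_le_liminf {a b e : ℕ → ℝ≥0∞} {c d : ℝ≥0∞} (hc : c ≠ ⊤)
    (he : Tendsto e atTop (𝓝 0)) (hab : ∀ i, a i + b i ≤ d + c + e i)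
    (hb : c ≤ liminf b atTop) : limsup a atTop ≤ d := by
  refine ENNReal.le_of_forall_pos_le_add fun ε hε _ ↦ ?_
  have hε2 : (ε : ℝ≥0∞) / 2 ≠ 0 := ENNReal.div_ne_zero.2 ⟨by simpa using hε.ne', by finiteness⟩
  have h1 : ∀ᶠ i in atTop, c ≤ b i + (ε : ℝ≥0∞) / 2 := by
    rcases eq_or_ne c 0 with rfl | hc0
    · exact Eventually.of_forall fun _ ↦ zero_le
    · filter_upwards [eventually_lt_of_lt_liminf
        ((ENNReal.sub_lt_self hc hc0 hε2).trans_le hb)] with i hi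
      exact tsub_le_iff_right.1 hi.le
  refine limsup_le_of_le (by isBoundedDefault) ?_
  filter_upwards [h1, he.eventually (eventually_le_nhds (pos_iff_ne_zero.2 hε2))] with i h2 h3
  refine (ENNReal.add_le_add_iff_right hc).1 ?_
  calc a i + c ≤ a i + (b i + ε / 2) := by gcongr
    _ = a i + b i + ε / 2 := by rw [add_assoc]
    _ ≤ d + c + e i + ε / 2 := add_le_add (hab i) le_rfl
    _ ≤ d + c + ε / 2 + ε / 2 := by gcongr
    _ = d + ε + c := by rw [add_assoc (d + c), ENNReal.add_halves, add_right_comm]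

variable {X : Type u} [MetricSpace X] [MeasurableSpace X] {μ : Measure X}

theorem totVarOn_le_liminf_of_gradPair {fi vi : ℕ → X → ℝ} {f : X → ℝ}
    (h : ∀ i, GradPair (fi i) (vi i)) (hlim : TendstoL1loc μ fi f univ) (U : Set X) :
    totVarOn μ f U ≤ liminf (fun i ↦ ∫⁻ x in U, ENNReal.ofReal (vi i x) ∂μ) atTop :=
  (totVarOn_le (fun i ↦ (h i).locallyLipschitzOnSet U) (hlim.mono (subset_univ U))).trans <|
    liminf_le_liminf <| Eventually.of_forall fun i ↦ lintegral_mono fun x ↦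
      ((h i).ptLip x).lipConst_le ((h i).grad_nonneg x)

variable [BorelSpace X] [ProperSpace X] [IsLocallyFiniteMeasure μ]

theorem exists_seq_gradPair [Nonempty X] {Cd : ℝ≥0} {CP : ℝ} (hG : IsGeodesic X)
    (hP : SupportsPoincare μ CP) (hCP : 0 < CP) (h : IsDoublingWith μ Cd) (hCd : 1 ≤ Cd)
    {A B : Set X} (hA : IsOpen A) (hB : IsOpen B) (hAB : A ∪ B = univ) {f : X → ℝ}
    (hf : IsBV μ f) :
    ∃ fi vi : ℕ → X → ℝ, (∀ i, GradPair (fi i) (vi i)) ∧ TendstoL1loc μ fi f univ ∧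
      ∀ i, ∫⁻ x, ENNReal.ofReal (vi i x) ∂μ ≤
        totVarOn μ f A + totVarOn μ f B + (i : ℝ≥0∞)⁻¹ := by
  obtain ⟨o⟩ := ‹Nonempty X›
  choose fi vi hGP hv hu using fun i : ℕ ↦ exists_gradPair_global hG hP hCP h hCd hA hB hAB hf
    (ENNReal.inv_ne_zero.2 (ENNReal.natCast_ne_top i)) o i
  refine ⟨fi, vi, hGP, fun K _ hK _ ↦ ?_, hv⟩
  obtain ⟨R, hR⟩ := hK.subset_closedBall o
  refine tendsto_of_tendsto_of_tendsto_of_le_of_le' tendsto_const_nhds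
    ENNReal.tendsto_inv_nat_nhds_zero (Eventually.of_forall fun _ ↦ zero_le) ?_
  filter_upwards [tendsto_natCast_atTop_atTop.eventually_ge_atTop R] with i hi
  exact (lintegral_mono_set (hR.trans (closedBall_subset_closedBall hi))).trans (hu i)

/-- Subadditivity of the total variation for two open sets that cover the space. -/
theorem totVarOn_univ_le_add [Nonempty X] {Cd : ℝ≥0} {CP : ℝ} (hG : IsGeodesic X)
    (hP : SupportsPoincare μ CP) (hCP : 0 < CP) (h : IsDoublingWith μ Cd) (hCd : 1 ≤ Cd)
    {A B : Set X} (hA : IsOpen A) (hB : IsOpen B) (hAB : A ∪ B = univ) {f : X → ℝ}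
    (hf : IsBV μ f) : totVarOn μ f univ ≤ totVarOn μ f A + totVarOn μ f B := by
  obtain ⟨fi, vi, hGP, hlim, hv⟩ := exists_seq_gradPair hG hP hCP h hCd hA hB hAB hf
  refine (totVarOn_le_liminf_of_gradPair hGP hlim univ).trans ?_
  simp only [setLIntegral_univ]
  have h1 : Tendsto (fun i : ℕ ↦ totVarOn μ f A + totVarOn μ f B + (i : ℝ≥0∞)⁻¹) atTop
      (𝓝 (totVarOn μ f A + totVarOn μ f B + 0)) :=
    tendsto_const_nhds.add ENNReal.tendsto_inv_nat_nhds_zero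
  rw [add_zero] at h1
  exact (liminf_le_liminf (Eventually.of_forall hv)).trans_eq h1.liminf_eq

end StrictApproximation

theorem statement14 {X : Type u} [MetricSpace X] [MeasurableSpace X] [BorelSpace X]
    (μ : Measure X) (Cd : ℝ≥0) (CP : ℝ) (hCd : 1 ≤ Cd) (hCP : 0 < CP)
    (hX : GoodSpace X μ Cd CP)
    (f : X → ℝ) (hf : IsBV μ f) :
    ∃ (fi : ℕ → X → ℝ) (vi : ℕ → X → ℝ),
      (∀ i, ∃ L : ℝ≥0, LipschitzWith L (fi i)) ∧
      (∀ i, ∃ L : ℝ≥0, LipschitzWith L (vi i)) ∧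
      (∀ i x, 0 ≤ vi i x) ∧
      (∀ i, ∃ M : ℝ, ∀ x, vi i x ≤ M) ∧
      (∀ i, IsUpperGradientOf (vi i) (fi i)) ∧
      TendstoL1loc μ fi f Set.univ ∧
      (∀ U : Set X, IsOpen U →
        totVarOn μ f U ≤
          Filter.liminf (fun i => ∫⁻ x in U, ENNReal.ofReal (vi i x) ∂μ) atTop) ∧
      (∀ F : Set X, IsClosed F →
        Filter.limsup (fun i => ∫⁻ x in F, ENNReal.ofReal (vi i x) ∂μ) atTop ≤
          totVarSet μ f F) := by
  obtain ⟨_, _, hG, h, hP⟩ := hX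
  have := h.properSpace hCd
  have := h.isLocallyFiniteMeasure hCd
  obtain ⟨fi, vi, hGP, hlim, hv⟩ := exists_seq_gradPair hG hP hCP h hCd isOpen_univ isOpen_empty
    (union_empty _) hf
  refine ⟨fi, vi, fun i ↦ (hGP i).lip_fun, fun i ↦ (hGP i).lip_grad, fun i ↦ (hGP i).grad_nonneg,
    fun i ↦ (hGP i).bdd_grad, fun i ↦ (hGP i).isUpperGradientOf, hlim,
    fun U _ ↦ totVarOn_le_liminf_of_gradPair hGP hlim U, fun F hF ↦ ?_⟩
  refine le_iInf fun W ↦ le_iInf fun hW ↦ le_iInf fun hFW ↦ ?_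
  refine limsup_le_of_add_le_of_le_liminf (c := totVarOn μ f Fᶜ)
    ((totVarOn_mono μ f (subset_univ _)).trans_lt hf.2).ne ENNReal.tendsto_inv_nat_nhds_zero
    (fun i ↦ ?_) (totVarOn_le_liminf_of_gradPair hGP hlim Fᶜ)
  rw [lintegral_add_compl _ hF.measurableSet]
  refine (hv i).trans ?_
  rw [totVarOn_empty, add_zero]
  gcongr
  refine totVarOn_univ_le_add hG hP hCP h hCd hW hF.isOpen_compl ?_ hf
  exact eq_univ_of_forall fun x ↦ (em (x ∈ F)).imp (fun hx ↦ hFW hx) id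

end
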